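/- Let β > 0 and α ∈ (0,1). Let G : ℝ → ℝ be 2π-periodic, four times continuously differentiable with α-Hölder continuous fourth derivative, and with ∫₀^{2π} G(θ) dθ = 0. Then the limit as n → ∞ of E_n^β[exp(∑_{μ=1}^n G(θ_μ))] exists and equals exp( (1/(2β)) ∑_{k≥1} k (a_k² + b_k²) ), where a_k = (1/π)∫₀^{2π} G(θ) cos(kθ) dθ and b_k = (1/π)∫₀^{2π} G(θ) sin(kθ) dθ. (This is the relative Szegő limit theorem of the paper in the case where the curve is the unit circle, for which the Grunsky operator vanishes.) -/

import Mathlib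

/-!
For `|t| ≤ 1` let `P_t` be the circular ensemble tilted by `exp (t ∑ G(θ_μ))`, with partition
function `Z_t`. The expectation in question is `Z_1 / Z_0`, and `d/dt log Z_t` is the mean of the
linear statistic `∑ G(θ_μ)` under `P_t`. It suffices to prove that this mean equals `t v + o(1)`
uniformly in `t`, where `v = (4/β) ∑ k |c_k|²` and `c_k` are the Fourier coefficients of `G`.
The uniformity is encoded by sequences: the mean value theorem for `log Z_t - v t² / 2` supplies
for every `n` one tilt `t_n` (`exists_tilt`), and `tendsto_statistic` treats arbitrary sequences
`t_n ∈ [-1, 1]`. The limit is then `exp (v / 2)`.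

The means of the power sums `p_k = ∑ e^{ikθ_μ}` are computed from the loop (Schwinger–Dyson)
equations `loop_eq`: the divergence of the vector field with components `e^{ikθ_i} p_m ρ`, where
`ρ` is the tilted density, integrates to zero over the torus. As the density need not be
differentiable at coincident points, every squared distance is first increased by `ε`.

* With `m = -k` the loop equation gives `E|p_k|² ≤ C k + 4 ∑_{j<k} E|p_j|²` for `k` at most a small
  multiple of `n`, hence bounds for fixed `k` that are uniform in `n` (`Tilt.mS_le_pow`).
* These bounds grow exponentially in `k`. For larger `k` they are replaced by an a priori bound
  `E ∑_{k≤n} |p_k|²/k = O(n log n)` (`energy_bound`), which comes from comparing the density with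
  `exp (-(β/2) ∑ r^k |p_k|²/k)` at `r = 1 - 1/n` and from `Z_0 ≥ (2π)^n` (Jensen). Together they
  give `∑_{j<k} E|p_j|² = O(k² n)` for all `k` and `n` (`Tilt.mS_le`).
* With `m = 0` the loop equation yields `E p_k - (2kt/β) c̄_k → 0` for fixed `k` (`tendsto_mean`)
  and `E p_k = O(k²)` uniformly (`Tilt.mean_le`). Since `∑ k² |c_k| < ∞` for `G ∈ C⁴`, dominated
  convergence allows summation over `k`.
-/

open MeasureTheory Finset Filter Topology

/-- The cube `[0, 2π]^n`. -/
noncomputable def cbeCube (n : ℕ) : Set (Fin n → ℝ) :=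
  Set.univ.pi fun _ => Set.Icc 0 (2 * Real.pi)

/-- The (unnormalized) density `∏_{μ<ν} |e^{iθ_μ} - e^{iθ_ν}|^β` of the circular β-ensemble. -/
noncomputable def cbeWeight (β : ℝ) (n : ℕ) (θ : Fin n → ℝ) : ℝ :=
  ∏ p ∈ Finset.univ.filter (fun p : Fin n × Fin n => p.1 < p.2),
    ‖Complex.exp (Complex.I * (θ p.1 : ℂ)) - Complex.exp (Complex.I * (θ p.2 : ℂ))‖ ^ β

/-- Expectation `E_n^β[f]` with respect to the circular β-ensemble. -/
noncomputable def cbeExp (β : ℝ) (n : ℕ) (f : (Fin n → ℝ) → ℝ) : ℝ :=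
  (∫ θ in cbeCube n, f θ * cbeWeight β n θ) / ∫ θ in cbeCube n, cbeWeight β n θ

/-! ### Power sums and the regularised loop equation -/

namespace CBE

/-- The Fourier mode `x ↦ e^{imx}`. -/
noncomputable def em (m : ℤ) (x : ℝ) : ℂ := Complex.exp (Complex.I * m * x)

/-- The power sum `p_m = ∑_μ e^{imθ_μ}`. -/
noncomputable def psum (n : ℕ) (m : ℤ) (θ : Fin n → ℝ) : ℂ := ∑ μ, em m (θ μ)

/-- The ordered pairs `μ < ν` of indices. -/
def pairs (n : ℕ) : Finset (Fin n × Fin n) :=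
  Finset.univ.filter (fun p : Fin n × Fin n => p.1 < p.2)

/-- The squared chord length `|e^{ix} - 1|² = 2 - 2 cos x`. -/
noncomputable def chord (x : ℝ) : ℝ := 2 - 2 * Real.cos x

/-- The density of the circular ensemble with every squared distance increased by `ε`, which
makes it smooth. -/
noncomputable def regW (β ε : ℝ) (n : ℕ) (θ : Fin n → ℝ) : ℝ :=
  ∏ p ∈ pairs n, (chord (θ p.1 - θ p.2) + ε) ^ (β / 2)

lemma em_add (m k : ℤ) (x : ℝ) : em (m + k) x = em m x * em k x := by
  rw [em, em, em, ← Complex.exp_add]; push_cast; ring_nf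

lemma em_zero (x : ℝ) : em 0 x = 1 := by simp [em]

lemma norm_em (m : ℤ) (x : ℝ) : ‖em m x‖ = 1 := by
  rw [em, show Complex.I * m * x = ((m * x : ℝ) : ℂ) * Complex.I by push_cast; ring]
  exact Complex.norm_exp_ofReal_mul_I _

lemma em_neg (m : ℤ) (x : ℝ) : em (-m) x = (starRingEnd ℂ) (em m x) := by
  rw [em, em, ← Complex.exp_conj]; simp

lemma em_periodic (m : ℤ) (x : ℝ) : em m (x + 2 * Real.pi) = em m x := by
  rw [em, em, Complex.exp_eq_exp_iff_exists_int]
  exact ⟨m, by push_cast; ring⟩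

lemma em_nat (k : ℕ) (x : ℝ) : em k x = em 1 x ^ k := by
  rw [em, em, ← Complex.exp_nat_mul]; push_cast; ring_nf

lemma hasDerivAt_em (m : ℤ) (x : ℝ) : HasDerivAt (em m) (Complex.I * m * em m x) x := by
  have h : HasDerivAt (fun y : ℝ => Complex.I * m * (y : ℂ)) (Complex.I * m * 1) x :=
    (Complex.ofRealCLM.hasDerivAt (x := x)).const_mul _
  have := h.cexp
  simp only [mul_one] at this
  rw [mul_comm]
  exact this

lemma continuous_em (m : ℤ) : Continuous (em m) := by unfold em; fun_prop

lemma continuous_psum (n : ℕ) (m : ℤ) : Continuous (psum n m) := by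
  unfold psum
  exact continuous_finsetSum _ fun i _ => (continuous_em m).comp (continuous_apply i)

lemma norm_psum_le (n : ℕ) (m : ℤ) (θ : Fin n → ℝ) : ‖psum n m θ‖ ≤ n := by
  refine (norm_sum_le _ _).trans ?_
  simp [norm_em]

lemma psum_zero (n : ℕ) (θ : Fin n → ℝ) : psum n 0 θ = n := by simp [psum, em_zero]

lemma psum_neg (n : ℕ) (m : ℤ) (θ : Fin n → ℝ) :
    psum n (-m) θ = (starRingEnd ℂ) (psum n m θ) := by
  simp [psum, em_neg, map_sum]

lemma chord_nonneg (x : ℝ) : 0 ≤ chord x := by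
  have := Real.cos_le_one x; unfold chord; linarith

lemma chord_le (x : ℝ) : chord x ≤ 4 := by
  have := Real.neg_one_le_cos x; unfold chord; linarith

lemma cos_sub_eq_em (x y : ℝ) : ((Real.cos (x - y) : ℝ) : ℂ) =
    (em 1 x * em (-1) y + em (-1) x * em 1 y) / 2 := by
  rw [Complex.ofReal_cos, Complex.cos, em, em, em, em, ← Complex.exp_add, ← Complex.exp_add]
  push_cast; ring_nf

lemma sin_sub_eq_em (x y : ℝ) : ((Real.sin (x - y) : ℝ) : ℂ) =
    (em (-1) x * em 1 y - em 1 x * em (-1) y) * Complex.I / 2 := by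
  rw [Complex.ofReal_sin, Complex.sin, em, em, em, em, ← Complex.exp_add, ← Complex.exp_add]
  push_cast; ring_nf

lemma em_mul_neg (x : ℝ) : em 1 x * em (-1) x = 1 := by
  rw [← em_add]; simp [em_zero]

lemma chord_eq_em (x y : ℝ) : ((chord (x - y) : ℝ) : ℂ) =
    (em 1 x - em 1 y) * (em (-1) x - em (-1) y) := by
  unfold chord
  rw [Complex.ofReal_sub, Complex.ofReal_mul, cos_sub_eq_em]
  push_cast
  linear_combination -em_mul_neg x - em_mul_neg y

lemma norm_sub_sq (x y : ℝ) :
    ‖Complex.exp (Complex.I * (x : ℂ)) - Complex.exp (Complex.I * (y : ℂ))‖ ^ 2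
      = chord (x - y) := by
  have h1 : ∀ x : ℝ, Complex.exp (Complex.I * (x : ℂ)) = em 1 x := by intro x; simp [em]
  rw [h1, h1]
  apply Complex.ofReal_injective
  rw [chord_eq_em, Complex.ofReal_pow, ← Complex.mul_conj', map_sub, em_neg, em_neg]

lemma cbeWeight_eq (β : ℝ) (n : ℕ) (θ : Fin n → ℝ) : cbeWeight β n θ = regW β 0 n θ := by
  unfold cbeWeight regW pairs
  refine Finset.prod_congr rfl fun p _ => ?_
  rw [add_zero, ← norm_sub_sq, ← Real.rpow_natCast, ← Real.rpow_mul (norm_nonneg _)]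
  congr 1; push_cast; ring

lemma cbeCube_eq (n : ℕ) : cbeCube n = Set.Icc (fun _ => 0) (fun _ => 2 * Real.pi) := by
  unfold cbeCube; exact Set.pi_univ_Icc _ _

lemma isCompact_cube (n : ℕ) : IsCompact (cbeCube n) := by
  rw [cbeCube_eq]; exact isCompact_Icc

/-- The divergence of a smooth vector field on the torus integrates to zero. -/
lemma integral_div_zero (n : ℕ) (f : Fin n → (Fin n → ℝ) → ℂ)
    (f' : Fin n → (Fin n → ℝ) → (Fin n → ℝ) →L[ℝ] ℂ)
    (hd : ∀ i x, HasFDerivAt (f i) (f' i x) x)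
    (hper : ∀ i x y, x i = 2 * Real.pi → y i = 0 → (∀ j, j ≠ i → x j = y j) → f i x = f i y)
    (hc : Continuous fun x => ∑ i, f' i x (Pi.single i 1)) :
    ∫ x in cbeCube n, ∑ i, f' i x (Pi.single i 1) = 0 := by
  rcases n with _ | n
  · simp
  · rw [cbeCube_eq]
    rw [integral_divergence_of_hasFDerivAt_off_countable' (fun _ => 0) (fun _ => 2 * Real.pi)
      (fun _ => by positivity) f f' ∅ Set.countable_empty
      (fun i => (continuous_iff_continuousAt.2 fun x => (hd i x).continuousAt).continuousOn)
      (fun x _ i => hd i x) (hc.continuousOn.integrableOn_compact isCompact_Icc)]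
    refine Finset.sum_eq_zero fun i _ => ?_
    rw [sub_eq_zero]
    congr 1
    funext x
    apply hper i
    · simp
    · simp
    · intro j hj
      obtain ⟨l, rfl⟩ := Fin.exists_succAbove_eq hj
      simp

/-- The logarithm of the regularised density with external potential `V`. -/
noncomputable def logW (β ε : ℝ) (n : ℕ) (V : ℝ → ℝ) (θ : Fin n → ℝ) : ℝ :=
  ∑ μ, V (θ μ) + ∑ p ∈ pairs n, β / 2 * Real.log (chord (θ p.1 - θ p.2) + ε)

lemma exp_logW (β ε : ℝ) (hε : 0 < ε) (n : ℕ) (V : ℝ → ℝ) (θ : Fin n → ℝ) :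
    Real.exp (logW β ε n V θ) = Real.exp (∑ μ, V (θ μ)) * regW β ε n θ := by
  rw [logW, Real.exp_add, Real.exp_sum (pairs n), regW]
  congr 1
  refine Finset.prod_congr rfl fun p _ => ?_
  rw [Real.rpow_def_of_pos (by have := chord_nonneg (θ p.1 - θ p.2); linarith), mul_comm]

lemma continuous_logW (β ε : ℝ) (hε : 0 < ε) (n : ℕ) (V : ℝ → ℝ) (hV : Continuous V) :
    Continuous (logW β ε n V) := by
  unfold logW
  refine Continuous.add (by fun_prop) (continuous_finsetSum _ fun p _ => ?_)
  refine continuous_const.mul (Continuous.log (by unfold chord; fun_prop) fun θ => ?_)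
  have := chord_nonneg (θ p.1 - θ p.2); positivity

/-- The derivative of `logW`. -/
noncomputable def logW' (β ε : ℝ) (n : ℕ) (V' : ℝ → ℝ) (θ : Fin n → ℝ) : (Fin n → ℝ) →L[ℝ] ℝ :=
  ∑ μ, V' (θ μ) • ContinuousLinearMap.proj (R := ℝ) (φ := fun _ : Fin n => ℝ) μ
  + ∑ p ∈ pairs n, (β / 2 * (2 * Real.sin (θ p.1 - θ p.2) / (chord (θ p.1 - θ p.2) + ε))) •
    (ContinuousLinearMap.proj (R := ℝ) (φ := fun _ : Fin n => ℝ) p.1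
      - ContinuousLinearMap.proj (R := ℝ) (φ := fun _ : Fin n => ℝ) p.2)

lemma hasFDerivAt_logW (β ε : ℝ) (hε : 0 < ε) (n : ℕ) (V V' : ℝ → ℝ)
    (hV : ∀ x, HasDerivAt V (V' x) x) (θ : Fin n → ℝ) :
    HasFDerivAt (logW β ε n V) (logW' β ε n V' θ) θ := by
  unfold logW logW'
  refine HasFDerivAt.add (HasFDerivAt.fun_sum fun μ _ => ?_) (HasFDerivAt.fun_sum fun p _ => ?_)
  · exact (hV (θ μ)).comp_hasFDerivAt θ (hasFDerivAt_apply μ θ)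
  · have hlog : ∀ x : ℝ, HasDerivAt (fun x => β / 2 * Real.log (chord x + ε))
        (β / 2 * (2 * Real.sin x / (chord x + ε))) x := by
      intro x
      refine HasDerivAt.const_mul _ (HasDerivAt.log ?_ ?_)
      · unfold chord
        have := (((Real.hasDerivAt_cos x).const_mul 2).const_sub 2).add_const ε
        simpa using this
      · have := chord_nonneg x; positivity
    exact (hlog (θ p.1 - θ p.2)).comp_hasFDerivAt (f := fun θ : Fin n → ℝ => θ p.1 - θ p.2) θ
      ((hasFDerivAt_apply p.1 θ).sub (hasFDerivAt_apply p.2 θ))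

/-- The integrand of the regularised loop equation, before multiplication by the density. -/
noncomputable def loopReg (β ε : ℝ) (n k : ℕ) (m : ℤ) (V' : ℝ → ℝ) (θ : Fin n → ℝ) : ℂ :=
  Complex.I * k * psum n k θ * psum n m θ + Complex.I * m * psum n (k + m) θ
  + psum n m θ * (∑ μ, (V' (θ μ) : ℂ) * em k (θ μ)
    + ∑ p ∈ pairs n,
      ((β / 2 * (2 * Real.sin (θ p.1 - θ p.2) / (chord (θ p.1 - θ p.2) + ε)) : ℝ) : ℂ)
        * (em k (θ p.1) - em k (θ p.2)))

/-- The regularised loop equation: the divergence of the vector field with components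
`e^{ikθ_i} p_m ρ`, where `ρ` is the regularised density, integrates to zero. -/
lemma loop_reg (β ε : ℝ) (hε : 0 < ε) (n k : ℕ) (m : ℤ) (V V' : ℝ → ℝ)
    (hV : ∀ x, HasDerivAt V (V' x) x) (hV' : Continuous V')
    (hper : Function.Periodic V (2 * Real.pi)) :
    ∫ θ in cbeCube n, loopReg β ε n k m V' θ *
      ((Real.exp (∑ μ, V (θ μ)) * regW β ε n θ : ℝ) : ℂ) = 0 := by
  have hVc : Continuous V := continuous_iff_continuousAt.2 fun x => (hV x).continuousAt
  let f : Fin n → (Fin n → ℝ) → ℂ := fun i θ =>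
    em k (θ i) * psum n m θ * ((Real.exp (logW β ε n V θ) : ℝ) : ℂ)
  let pr : Fin n → (Fin n → ℝ) →L[ℝ] ℝ := fun i =>
    ContinuousLinearMap.proj (R := ℝ) (φ := fun _ : Fin n => ℝ) i
  have hem : ∀ (j : ℤ) (i : Fin n) (θ : Fin n → ℝ), HasFDerivAt (fun θ : Fin n → ℝ => em j (θ i))
      ((pr i).smulRight (Complex.I * j * em j (θ i))) θ := by
    intro j i θ
    have := (hasDerivAt_em j (θ i)).hasFDerivAt.comp θ (hasFDerivAt_apply (𝕜 := ℝ) i θ)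
    exact this
  have hps : ∀ (θ : Fin n → ℝ), HasFDerivAt (psum n m)
      (∑ i, (pr i).smulRight (Complex.I * m * em m (θ i))) θ := by
    intro θ
    unfold psum
    exact HasFDerivAt.fun_sum fun i _ => hem m i θ
  have hex : ∀ (θ : Fin n → ℝ), HasFDerivAt
      (fun θ => ((Real.exp (logW β ε n V θ) : ℝ) : ℂ))
      (Complex.ofRealCLM.comp (Real.exp (logW β ε n V θ) • logW' β ε n V' θ)) θ := by
    intro θ
    exact Complex.ofRealCLM.hasFDerivAt.comp θ (hasFDerivAt_logW β ε hε n V V' hV θ).exp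
  let f' : Fin n → (Fin n → ℝ) → (Fin n → ℝ) →L[ℝ] ℂ := fun i θ =>
    (em k (θ i) * psum n m θ) •
      (Complex.ofRealCLM.comp (Real.exp (logW β ε n V θ) • logW' β ε n V' θ))
    + ((Real.exp (logW β ε n V θ) : ℝ) : ℂ) •
      (em k (θ i) • (∑ i, (pr i).smulRight (Complex.I * m * em m (θ i)))
        + psum n m θ • ((pr i).smulRight (Complex.I * k * em k (θ i))))
  have hd : ∀ i x, HasFDerivAt (f i) (f' i x) x := by
    intro i θ
    exact ((hem k i θ).mul (hps θ)).mul (hex θ)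
  have hsum : ∀ θ, ∑ i, f' i θ (Pi.single i 1) = loopReg β ε n k m V' θ *
      ((Real.exp (∑ μ, V (θ μ)) * regW β ε n θ : ℝ) : ℂ) := by
    intro θ
    rw [← exp_logW β ε hε]
    have e1 : ∀ i, f' i θ (Pi.single i 1) =
        (psum n m θ * (em k (θ i) * ((logW' β ε n V' θ (Pi.single i 1) : ℝ) : ℂ))
          + Complex.I * m * em (k + m) (θ i) + Complex.I * k * psum n m θ * em k (θ i))
        * ((Real.exp (logW β ε n V θ) : ℝ) : ℂ) := by
      intro i
      simp only [f', pr, _root_.add_apply, _root_.smul_apply,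
        ContinuousLinearMap.comp_apply, _root_.sum_apply,
        ContinuousLinearMap.smulRight_apply, ContinuousLinearMap.proj_apply, smul_eq_mul,
        Complex.ofRealCLM_apply]
      rw [Finset.sum_eq_single i (fun j _ hj => by simp [hj]) (by simp)]
      rw [em_add]
      simp
      ring
    simp_rw [e1]
    rw [← Finset.sum_mul]
    congr 1
    rw [Finset.sum_add_distrib, Finset.sum_add_distrib, ← Finset.mul_sum, ← Finset.mul_sum,
      ← Finset.mul_sum]
    have e2 : ∑ i, em k (θ i) * ((logW' β ε n V' θ (Pi.single i 1) : ℝ) : ℂ) =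
        ∑ μ, (V' (θ μ) : ℂ) * em k (θ μ)
      + ∑ p ∈ pairs n,
        ((β / 2 * (2 * Real.sin (θ p.1 - θ p.2) / (chord (θ p.1 - θ p.2) + ε)) : ℝ) : ℂ)
        * (em k (θ p.1) - em k (θ p.2)) := by
      unfold logW'
      simp only [_root_.add_apply, _root_.sum_apply,
        _root_.smul_apply, _root_.sub_apply,
        ContinuousLinearMap.proj_apply, smul_eq_mul, Complex.ofReal_add, Complex.ofReal_sum,
        Complex.ofReal_mul, Complex.ofReal_sub, mul_add, Finset.mul_sum, Finset.sum_add_distrib]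
      congr 1
      · rw [Finset.sum_comm]
        refine Finset.sum_congr rfl fun μ _ => ?_
        rw [Finset.sum_eq_single μ (fun j _ hj => by simp [hj.symm]) (by simp)]
        simp [mul_comm]
      · rw [Finset.sum_comm]
        refine Finset.sum_congr rfl fun p _ => ?_
        have key : ∀ q : Fin n, ∑ i, em k (θ i) * (((Pi.single i (1:ℝ) : Fin n → ℝ) q : ℝ) : ℂ)
            = em k (θ q) := by
          intro q
          rw [Finset.sum_eq_single q (fun j _ hj => by simp [hj.symm]) (by simp)]
          simp
        rw [← key p.1, ← key p.2, ← Finset.sum_sub_distrib, Finset.mul_sum]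
        refine Finset.sum_congr rfl fun i _ => ?_
        ring
    rw [e2]
    unfold loopReg
    simp only [psum]
    ring
  have hmain := integral_div_zero n f f' hd ?_ ?_
  · simp_rw [hsum] at hmain
    exact hmain
  · intro i x y hx hy hxy
    have hshift : ∀ j, x j = y j ∨ x j = y j + 2 * Real.pi := by
      intro j
      by_cases h : j = i
      · right; rw [h, hx, hy]; ring
      · left; exact hxy j h
    have h1 : ∀ (l : ℤ) j, em l (x j) = em l (y j) := by
      intro l j
      rcases hshift j with h | h <;> rw [h]
      exact em_periodic _ _
    have h2 : ∀ j, V (x j) = V (y j) := by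
      intro j
      rcases hshift j with h | h <;> rw [h]
      exact hper _
    have h3 : ∀ j l, chord (x j - x l) = chord (y j - y l) := by
      intro j l
      apply Complex.ofReal_injective
      rw [chord_eq_em, chord_eq_em]; simp only [h1]
    simp only [f, psum, logW, h1, h2, h3]
  · simp_rw [hsum]
    simp_rw [← exp_logW β ε hε]
    refine Continuous.mul ?_ (Complex.continuous_ofReal.comp
      (Real.continuous_exp.comp (continuous_logW β ε hε n V hVc)))
    have hp := continuous_psum n
    have he := continuous_em
    unfold loopReg
    refine Continuous.add ?_ (Continuous.mul (hp m) (Continuous.add ?_ ?_))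
    · exact ((continuous_const.mul (hp _)).mul (hp _)).add (continuous_const.mul (hp _))
    · exact continuous_finsetSum _ fun i _ => (Complex.continuous_ofReal.comp
        (hV'.comp (continuous_apply i))).mul ((he _).comp (continuous_apply i))
    · refine continuous_finsetSum _ fun p _ => Continuous.mul (Complex.continuous_ofReal.comp
        (continuous_const.mul (Continuous.div (by fun_prop) (by unfold chord; fun_prop)
          fun θ => ?_)))
        (((he _).comp (continuous_apply _)).sub ((he _).comp (continuous_apply _)))
      have := chord_nonneg (θ p.1 - θ p.2); positivity

end CBE

/-! ### The loop equation -/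

namespace CBE

lemma continuous_chord : Continuous chord := by unfold chord; fun_prop

lemma continuous_regW (β ε : ℝ) (hβ : 0 ≤ β) (n : ℕ) : Continuous (regW β ε n) := by
  unfold regW
  refine continuous_finsetProd _ fun p _ => Continuous.rpow_const ?_ fun _ => Or.inr (by positivity)
  unfold chord; fun_prop

lemma regW_nonneg (β ε : ℝ) (hε : 0 ≤ ε) (n : ℕ) (θ : Fin n → ℝ) : 0 ≤ regW β ε n θ :=
  Finset.prod_nonneg fun _ _ => Real.rpow_nonneg (add_nonneg (chord_nonneg _) hε) _

lemma regW_le (β ε : ℝ) (hβ : 0 ≤ β) (hε : 0 ≤ ε) (hε1 : ε ≤ 1) (n : ℕ) (θ : Fin n → ℝ) :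
    regW β ε n θ ≤ ((5 : ℝ) ^ (β / 2)) ^ (pairs n).card := by
  unfold regW
  rw [← Finset.prod_const]
  refine Finset.prod_le_prod (fun p _ => Real.rpow_nonneg (add_nonneg (chord_nonneg _) hε) _)
    fun p _ => Real.rpow_le_rpow (add_nonneg (chord_nonneg _) hε) ?_ (by positivity)
  have := chord_le (θ p.1 - θ p.2); linarith

lemma tendsto_regW (β : ℝ) (hβ : 0 ≤ β) (n : ℕ) (θ : Fin n → ℝ) :
    Tendsto (fun ε => regW β ε n θ) (𝓝[>] 0) (𝓝 (cbeWeight β n θ)) := by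
  rw [cbeWeight_eq]
  refine tendsto_nhdsWithin_of_tendsto_nhds ?_
  have : Continuous fun ε => regW β ε n θ := by
    unfold regW
    refine continuous_finsetProd _ fun p _ => Continuous.rpow_const ?_
      fun _ => Or.inr (by positivity)
    fun_prop
  exact this.tendsto 0

lemma continuous_cbeWeight (β : ℝ) (hβ : 0 ≤ β) (n : ℕ) : Continuous (cbeWeight β n) := by
  rw [show cbeWeight β n = regW β 0 n from funext (cbeWeight_eq β n)]
  exact continuous_regW β 0 hβ n

lemma cbeWeight_nonneg (β : ℝ) (n : ℕ) (θ : Fin n → ℝ) : 0 ≤ cbeWeight β n θ := by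
  rw [cbeWeight_eq]; exact regW_nonneg β 0 le_rfl n θ

/-- The polynomial `(z + w)(z^k - w^k)/(z - w)` at `z = e^{ix}`, `w = e^{iy}`. -/
noncomputable def kern (k : ℕ) (x y : ℝ) : ℂ :=
  (em 1 x + em 1 y) * ∑ j ∈ range k, em 1 x ^ j * em 1 y ^ (k - 1 - j)

lemma continuous_kern (k : ℕ) {n : ℕ} (p : Fin n × Fin n) :
    Continuous fun θ : Fin n → ℝ => kern k (θ p.1) (θ p.2) := by
  have := continuous_em 1
  unfold kern; fun_prop

lemma kern_symm (k : ℕ) (x y : ℝ) : kern k x y = kern k y x := by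
  unfold kern
  rw [add_comm]
  congr 1
  have := Finset.sum_range_reflect (fun j => em 1 x ^ j * em 1 y ^ (k - 1 - j)) k
  rw [← this]
  refine Finset.sum_congr rfl fun j hj => ?_
  have : j < k := Finset.mem_range.1 hj
  rw [mul_comm, show k - 1 - (k - 1 - j) = j by omega]

/-- The interaction term of a pair. The factor `z - w` of `z^k - w^k` cancels the singularity of
the pair force, so the regularisation only enters through a factor `d / (d + ε)`. -/
lemma pair_identity (β ε : ℝ) (k : ℕ) (x y : ℝ) :
    ((β / 2 * (2 * Real.sin (x - y) / (chord (x - y) + ε)) : ℝ) : ℂ) * (em k x - em k y)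
      = (β / 2) * Complex.I * (((chord (x - y) / (chord (x - y) + ε) : ℝ) : ℂ) * kern k x y) := by
  have hg := geom_sum₂_mul (em 1 x) (em 1 y) k
  rw [em_nat, em_nat, ← hg]
  push_cast
  rw [← Complex.ofReal_sub, ← Complex.ofReal_sin, sin_sub_eq_em, chord_eq_em, kern]
  have h1 := em_mul_neg x
  have h2 := em_mul_neg y
  generalize (∑ j ∈ range k, em 1 x ^ j * em 1 y ^ (k - 1 - j)) = S
  simp only [div_eq_mul_inv]
  generalize ((em 1 x - em 1 y) * (em (-1) x - em (-1) y) + (ε : ℂ))⁻¹ = D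
  linear_combination (β / 2 * Complex.I * D * S * (em 1 x - em 1 y)) * (h2 - h1)

lemma sum_univ_eq_pairs {n : ℕ} {M : Type*} [AddCommMonoid M] (X : Fin n → Fin n → M)
    (hX : ∀ μ ν, X μ ν = X ν μ) :
    ∑ μ, ∑ ν, X μ ν = (2 : ℕ) • ∑ p ∈ pairs n, X p.1 p.2 + ∑ μ, X μ μ := by
  rw [← Finset.sum_product', Finset.univ_product_univ]
  rw [← Finset.sum_filter_add_sum_filter_not univ (fun p : Fin n × Fin n => p.1 < p.2)]
  rw [← Finset.sum_filter_add_sum_filter_not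
    (univ.filter fun p : Fin n × Fin n => ¬ p.1 < p.2) (fun p : Fin n × Fin n => p.2 < p.1)]
  rw [two_nsmul, add_assoc]
  refine congrArg₂ _ rfl (congrArg₂ _ ?_ ?_)
  · refine Finset.sum_bij' (fun p _ => (p.2, p.1)) (fun p _ => (p.2, p.1)) ?_ ?_ ?_ ?_ ?_
    · intro p hp; simp only [pairs, mem_filter, mem_univ, true_and] at hp ⊢; exact hp.2
    · intro p hp; simp only [pairs, mem_filter, mem_univ, true_and] at hp ⊢
      exact ⟨not_lt.2 hp.le, hp⟩
    · intro p _; rfl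
    · intro p _; rfl
    · intro p _; exact hX _ _
  · refine Finset.sum_bij' (fun p _ => p.1) (fun μ _ => (μ, μ)) ?_ ?_ ?_ ?_ ?_
    · intro p _; simp
    · intro μ _; simp
    · intro p hp
      simp only [mem_filter, mem_univ, true_and, not_lt] at hp
      exact Prod.ext rfl (le_antisymm hp.2 hp.1)
    · intro μ _; rfl
    · intro p hp
      simp only [mem_filter, mem_univ, true_and, not_lt] at hp
      rw [le_antisymm hp.2 hp.1]

/-- The quadratic term `∑_{0<j<k} p_j p_{k-j}` of the loop equation. -/
noncomputable def quad (n k : ℕ) (θ : Fin n → ℝ) : ℂ :=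
  ∑ j ∈ Ico 1 k, psum n j θ * psum n ((k - j : ℕ) : ℤ) θ

lemma psum_nat (n k : ℕ) (θ : Fin n → ℝ) : psum n k θ = ∑ μ, em 1 (θ μ) ^ k := by
  simp [psum, em_nat]

lemma continuous_quad (n k : ℕ) : Continuous (quad n k) := by
  unfold quad
  exact continuous_finsetSum _ fun j _ => (continuous_psum _ _).mul (continuous_psum _ _)

/-- The interaction terms add up to a polynomial in the power sums; the terms `n p_k` are the
summands of order `0` and `k` of the convolution `∑ p_j p_{k-j}`. -/
lemma sum_kern (n k : ℕ) (hk : 1 ≤ k) (θ : Fin n → ℝ) :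
    ∑ p ∈ pairs n, kern k (θ p.1) (θ p.2) = n * psum n k θ + quad n k θ - k * psum n k θ := by
  have h := sum_univ_eq_pairs (fun μ ν : Fin n => kern k (θ μ) (θ ν)) fun μ ν => kern_symm _ _ _
  have hdiag : ∑ μ, kern k (θ μ) (θ μ) = 2 * (k * psum n k θ) := by
    rw [psum_nat, Finset.mul_sum, Finset.mul_sum]
    refine Finset.sum_congr rfl fun μ _ => ?_
    unfold kern
    rw [Finset.sum_congr rfl (g := fun _ => em 1 (θ μ) ^ (k - 1))]
    · obtain ⟨l, rfl⟩ : ∃ l, k = l + 1 := ⟨k - 1, by omega⟩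
      simp [pow_succ]; ring
    · intro j hj
      have : j < k := Finset.mem_range.1 hj
      rw [← pow_add]; congr 1; omega
  have hall : ∑ μ, ∑ ν, kern k (θ μ) (θ ν) = 2 * (n * psum n k θ + quad n k θ) := by
    have h1 : ∀ x y, kern k x y = ∑ j ∈ range k, em 1 x ^ (j + 1) * em 1 y ^ (k - (j + 1))
        + ∑ j ∈ range k, em 1 x ^ j * em 1 y ^ (k - j) := by
      intro x y
      unfold kern
      rw [add_mul, Finset.mul_sum, Finset.mul_sum]
      congr 1
      · refine Finset.sum_congr rfl fun j hj => ?_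
        rw [show k - (j + 1) = k - 1 - j by omega]; ring
      · refine Finset.sum_congr rfl fun j hj => ?_
        have : j < k := Finset.mem_range.1 hj
        rw [show k - j = k - 1 - j + 1 by omega]; ring
    have h2 : ∀ a b : ℕ, ∑ μ, ∑ ν, em 1 (θ μ) ^ a * em 1 (θ ν) ^ b = psum n a θ * psum n b θ := by
      intro a b
      rw [psum_nat, psum_nat, Finset.sum_mul_sum]
    have h3 : ∑ μ, ∑ ν, kern k (θ μ) (θ ν) =
        ∑ j ∈ range k, psum n ((j + 1 : ℕ) : ℤ) θ * psum n ((k - (j + 1) : ℕ) : ℤ) θ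
        + ∑ j ∈ range k, psum n j θ * psum n ((k - j : ℕ) : ℤ) θ := by
      simp_rw [h1, Finset.sum_add_distrib, ← h2]
      have swap : ∀ F : Fin n → Fin n → ℕ → ℂ, ∑ μ, ∑ ν, ∑ j ∈ range k, F μ ν j
          = ∑ j ∈ range k, ∑ μ, ∑ ν, F μ ν j := fun F =>
        (Finset.sum_congr rfl fun μ _ => Finset.sum_comm).trans Finset.sum_comm
      rw [swap, swap]
    rw [h3, quad]
    obtain ⟨l, rfl⟩ : ∃ l, k = l + 1 := ⟨k - 1, by omega⟩
    rw [Finset.sum_range_succ, Finset.sum_range_succ']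
    have h4 : ∑ j ∈ Ico 1 (l + 1), psum n j θ * psum n ((l + 1 - j : ℕ) : ℤ) θ
      = ∑ j ∈ range l, psum n ((j + 1 : ℕ) : ℤ) θ * psum n ((l + 1 - (j + 1) : ℕ) : ℤ) θ := by
      rw [Finset.sum_Ico_eq_sum_range]
      simp only [Nat.add_sub_cancel, add_comm 1]
    rw [h4]
    simp [psum_zero]
    ring
  rw [hall, hdiag, nsmul_eq_mul] at h
  push_cast at h
  linear_combination (-1 / 2 : ℂ) * h

/-- The integrand of the loop equation, before multiplication by the density. -/
noncomputable def loopInt (β : ℝ) (n k : ℕ) (m : ℤ) (V' : ℝ → ℝ) (θ : Fin n → ℝ) : ℂ :=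
  Complex.I * k * psum n k θ * psum n m θ + Complex.I * m * psum n (k + m) θ
  + psum n m θ * (∑ μ, (V' (θ μ) : ℂ) * em k (θ μ)
    + (β / 2) * Complex.I * (n * psum n k θ + quad n k θ - k * psum n k θ))

/-- The loop (Schwinger–Dyson) equation of the circular ensemble with external potential `V`. -/
lemma loop_eq (β : ℝ) (hβ : 0 < β) (n k : ℕ) (hk : 1 ≤ k) (m : ℤ) (V V' : ℝ → ℝ)
    (hV : ∀ x, HasDerivAt V (V' x) x) (hV' : Continuous V')
    (hper : Function.Periodic V (2 * Real.pi)) :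
    ∫ θ in cbeCube n, loopInt β n k m V' θ *
      ((Real.exp (∑ μ, V (θ μ)) * cbeWeight β n θ : ℝ) : ℂ) = 0 := by
  have hVc : Continuous V := continuous_iff_continuousAt.2 fun x => (hV x).continuousAt
  -- the part of the integrand not affected by the regularisation
  let A : (Fin n → ℝ) → ℂ := fun θ =>
    Complex.I * k * psum n k θ * psum n m θ + Complex.I * m * psum n (k + m) θ
    + psum n m θ * (∑ μ, (V' (θ μ) : ℂ) * em k (θ μ))
  have hA : Continuous A := by
    have hp := continuous_psum n
    exact (((continuous_const.mul (hp _)).mul (hp _)).add (continuous_const.mul (hp _))).add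
      ((hp _).mul (continuous_finsetSum _ fun i _ => (Complex.continuous_ofReal.comp
        (hV'.comp (continuous_apply i))).mul ((continuous_em _).comp (continuous_apply i))))
  have hreg : ∀ ε θ, loopReg β ε n k m V' θ = A θ + psum n m θ * ((β / 2) * Complex.I *
      ∑ p ∈ pairs n, ((chord (θ p.1 - θ p.2) / (chord (θ p.1 - θ p.2) + ε) : ℝ) : ℂ) *
        kern k (θ p.1) (θ p.2)) := by
    intro ε θ
    simp only [loopReg, A]
    rw [Finset.sum_congr (s₁ := pairs n) rfl fun (p : Fin n × Fin n) _ =>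
      pair_identity β ε k (θ p.1) (θ p.2), ← Finset.mul_sum]
    ring
  have hlim : ∀ θ, loopInt β n k m V' θ = A θ + psum n m θ * ((β / 2) * Complex.I *
      ∑ p ∈ pairs n, kern k (θ p.1) (θ p.2)) := by
    intro θ
    rw [sum_kern n k hk]
    simp only [loopInt, A]
    ring
  let C : ℝ := ((5 : ℝ) ^ (β / 2)) ^ (pairs n).card
  have htend : Tendsto (fun ε => ∫ θ in cbeCube n, loopReg β ε n k m V' θ *
      ((Real.exp (∑ μ, V (θ μ)) * regW β ε n θ : ℝ) : ℂ)) (𝓝[>] 0)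
      (𝓝 (∫ θ in cbeCube n, loopInt β n k m V' θ *
        ((Real.exp (∑ μ, V (θ μ)) * cbeWeight β n θ : ℝ) : ℂ))) := by
    refine tendsto_integral_filter_of_dominated_convergence
      (fun θ => (‖A θ‖ + n * (β / 2 * ∑ p ∈ pairs n, ‖kern k (θ p.1) (θ p.2)‖)) *
        (Real.exp (∑ μ, V (θ μ)) * C)) ?_ ?_ ?_ ?_
    · filter_upwards [self_mem_nhdsWithin] with ε hε
      have hε : 0 < ε := hε
      refine Continuous.aestronglyMeasurable ?_
      simp_rw [hreg]
      refine Continuous.mul (hA.add ((continuous_psum _ _).mul (continuous_const.mul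
        (continuous_finsetSum _ fun p _ => Continuous.mul (Complex.continuous_ofReal.comp
          (Continuous.div ?_ ?_ fun θ => ?_)) (continuous_kern k p)))))
        (Complex.continuous_ofReal.comp (Continuous.mul (by fun_prop)
          (continuous_regW β ε hβ.le n)))
      · have := continuous_chord; fun_prop
      · have := continuous_chord; fun_prop
      · have := chord_nonneg (θ p.1 - θ p.2); positivity
    · filter_upwards [Ioo_mem_nhdsGT (zero_lt_one' ℝ)] with ε hε
      refine Eventually.of_forall fun θ => ?_
      rw [norm_mul, hreg]
      have hw := regW_nonneg β ε hε.1.le n θ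
      have hw' := regW_le β ε hβ.le hε.1.le hε.2.le n θ
      refine mul_le_mul ?_ ?_ (norm_nonneg _) (by positivity)
      · refine (norm_add_le _ _).trans (add_le_add le_rfl ?_)
        rw [norm_mul, norm_mul, norm_mul]
        refine mul_le_mul (norm_psum_le _ _ _) ?_ (by positivity) (by positivity)
        rw [show ‖(β : ℂ) / 2‖ = β / 2 by
          rw [norm_div, Complex.norm_real, Real.norm_of_nonneg hβ.le]; simp, Complex.norm_I, mul_one]
        gcongr
        refine (norm_sum_le _ _).trans (Finset.sum_le_sum fun p _ => ?_)
        rw [norm_mul]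
        refine mul_le_of_le_one_left (norm_nonneg _) ?_
        have h0 := chord_nonneg (θ p.1 - θ p.2)
        have := hε.1
        rw [Complex.norm_real, Real.norm_of_nonneg (by positivity), div_le_one (by positivity)]
        linarith
      · rw [Complex.norm_real, Real.norm_of_nonneg (by positivity)]
        gcongr
    · refine ContinuousOn.integrableOn_compact (isCompact_cube n) (Continuous.continuousOn ?_)
      refine Continuous.mul (hA.norm.add (continuous_const.mul (continuous_const.mul
        (continuous_finsetSum _ fun p _ => (continuous_kern k p).norm)))) ?_
      fun_prop
    · refine Eventually.of_forall fun θ => ?_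
      have hw := tendsto_regW β hβ.le n θ
      have hwC := (Complex.continuous_ofReal.tendsto _).comp hw
      simp_rw [hreg, hlim]
      -- at a coincidence `θ_μ = θ_ν` the limiting density vanishes, so the value of the
      -- regularising factor there is irrelevant
      have hq : ∀ p ∈ pairs n, Tendsto (fun ε =>
          ((chord (θ p.1 - θ p.2) / (chord (θ p.1 - θ p.2) + ε) : ℝ) : ℂ) *
            kern k (θ p.1) (θ p.2) * ((regW β ε n θ : ℝ) : ℂ)) (𝓝[>] 0)
          (𝓝 (kern k (θ p.1) (θ p.2) * ((cbeWeight β n θ : ℝ) : ℂ))) := by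
        intro p hp
        by_cases h0 : chord (θ p.1 - θ p.2) = 0
        · have : cbeWeight β n θ = 0 := by
            rw [cbeWeight_eq]
            refine Finset.prod_eq_zero hp ?_
            rw [h0, add_zero, Real.zero_rpow (by positivity)]
          simp [h0, this]
        · have h1 : Tendsto (fun ε => chord (θ p.1 - θ p.2) / (chord (θ p.1 - θ p.2) + ε)) (𝓝[>] 0)
              (𝓝 1) := by
            refine tendsto_nhdsWithin_of_tendsto_nhds ?_
            have : ContinuousAt (fun ε => chord (θ p.1 - θ p.2) / (chord (θ p.1 - θ p.2) + ε)) 0 :=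
              ContinuousAt.div (by fun_prop) (by fun_prop) (by simpa using h0)
            have h2 := this.tendsto
            simpa [h0] using h2
          have h2 := (((Complex.continuous_ofReal.tendsto _).comp h1).mul_const
            (kern k (θ p.1) (θ p.2))).mul hwC
          simpa using h2
      have hs := tendsto_finsetSum _ hq
      have h3 := ((hwC.const_mul (A θ)).add (hs.const_mul (psum n m θ * ((β / 2) * Complex.I))))
        |>.mul_const ((Real.exp (∑ μ, V (θ μ)) : ℝ) : ℂ)
      refine (h3.congr fun ε => ?_).trans_eq ?_
      · simp only [Function.comp]
        rw [← Finset.sum_mul]; push_cast; ring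
      · rw [← Finset.sum_mul]; push_cast; ring_nf
  refine tendsto_nhds_unique htend ?_
  refine (tendsto_const_nhds (x := (0 : ℂ))).congr' ?_
  filter_upwards [self_mem_nhdsWithin] with ε hε
  exact (loop_reg β ε hε n k m V V' hV hV' hper).symm

end CBE

/-! ### Logarithmic energy bounds -/

namespace CBE

lemma one_sub_normSq (r x y : ℝ) : ‖1 - r * (em 1 x * em (-1) y)‖ ^ 2
    = (1 - r) ^ 2 + r * chord (x - y) := by
  apply Complex.ofReal_injective
  rw [Complex.ofReal_pow, ← Complex.mul_conj']
  push_cast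
  rw [chord_eq_em, em_neg 1 x, em_neg 1 y]
  have h1 := em_mul_neg x
  have h2 := em_mul_neg y
  rw [em_neg] at h1 h2
  simp only [map_sub, map_one, map_mul, Complex.conj_ofReal, Complex.conj_conj]
  linear_combination (r ^ 2 * em 1 y * (starRingEnd ℂ) (em 1 y) - r) * h1 + (r ^ 2 - r) * h2

/-- Expansion of the regularised logarithmic energy in the power sums. -/
lemma hasSum_energy (r : ℝ) (hr : 0 < r) (hr1 : r < 1) (n : ℕ) (θ : Fin n → ℝ) :
    HasSum (fun k : ℕ => r ^ k / k * ‖psum n k θ‖ ^ 2)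
      (-∑ μ, ∑ ν, 1 / 2 * Real.log ((1 - r) ^ 2 + r * chord (θ μ - θ ν))) := by
  have h1 : ∀ μ ν : Fin n, HasSum
      (fun k : ℕ => (((r * (em 1 (θ μ) * em (-1) (θ ν))) ^ k / k : ℂ)).re)
      (-(1 / 2 * Real.log ((1 - r) ^ 2 + r * chord (θ μ - θ ν)))) := by
    intro μ ν
    have hz : ‖(r : ℂ) * (em 1 (θ μ) * em (-1) (θ ν))‖ < 1 := by
      rw [norm_mul, norm_mul, norm_em, norm_em, Complex.norm_real, Real.norm_of_nonneg hr.le]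
      simpa using hr1
    have := Complex.hasSum_re (Complex.hasSum_taylorSeries_neg_log hz)
    rw [Complex.neg_re, Complex.log_re] at this
    rw [← one_sub_normSq, Real.log_pow]
    convert this using 2
    push_cast; ring
  have h2 := hasSum_sum (s := univ) fun (μ : Fin n) _ =>
    hasSum_sum (s := univ) fun (ν : Fin n) _ => h1 μ ν
  simp only [Finset.sum_neg_distrib] at h2
  convert h2 using 1
  funext k
  have h3 : ((‖psum n k θ‖ ^ 2 : ℝ) : ℂ) =
      ∑ μ, ∑ ν, (em 1 (θ μ) * em (-1) (θ ν)) ^ k := by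
    rw [Complex.ofReal_pow, ← Complex.mul_conj', psum_nat, map_sum, Finset.sum_mul_sum]
    refine Finset.sum_congr rfl fun μ _ => Finset.sum_congr rfl fun ν _ => ?_
    rw [map_pow, ← em_neg, mul_pow]
  rw [← Complex.ofReal_re (r ^ k / k * ‖psum n k θ‖ ^ 2), Complex.ofReal_mul, h3, Finset.mul_sum,
    Complex.re_sum]
  refine Finset.sum_congr rfl fun μ _ => ?_
  rw [Finset.mul_sum, Complex.re_sum]
  refine Finset.sum_congr rfl fun ν _ => ?_
  congr 1
  push_cast
  rw [mul_pow (r : ℂ)]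
  ring

/-- The regularised energy `∑_k r^k |p_k|² / k`. -/
noncomputable def energy (r : ℝ) (n : ℕ) (θ : Fin n → ℝ) : ℝ :=
  ∑' k : ℕ, r ^ k / k * ‖psum n k θ‖ ^ 2

lemma log_arg_pos (r : ℝ) (hr : 0 < r) (hr1 : r < 1) (x : ℝ) :
    0 < (1 - r) ^ 2 + r * chord x := by
  have := chord_nonneg x
  have : 0 < 1 - r := by linarith
  positivity

lemma continuous_energy (r : ℝ) (hr : 0 < r) (hr1 : r < 1) (n : ℕ) : Continuous (energy r n) := by
  have : energy r n = fun θ =>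
      -∑ μ, ∑ ν, 1 / 2 * Real.log ((1 - r) ^ 2 + r * chord (θ μ - θ ν)) :=
    funext fun θ => (hasSum_energy r hr hr1 n θ).tsum_eq
  rw [this]
  have := continuous_chord
  refine (continuous_finsetSum _ fun μ _ => continuous_finsetSum _ fun ν _ =>
    continuous_const.mul (Continuous.log (by fun_prop) fun θ => ?_)).neg
  exact (log_arg_pos r hr hr1 _).ne'

/-- The regularised density is an explicit Gaussian-like function of the power sums. -/
lemma regW_eq_exp (β r : ℝ) (hr : 0 < r) (hr1 : r < 1) (n : ℕ) (θ : Fin n → ℝ) :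
    regW β ((1 - r) ^ 2 / r) n θ = Real.exp (β / 2 *
      (-energy r n θ - n * Real.log (1 - r) - (pairs n).card * Real.log r)) := by
  have h := (hasSum_energy r hr hr1 n θ).tsum_eq
  rw [sum_univ_eq_pairs _ fun μ ν => by rw [← neg_sub (θ ν), chord, chord, Real.cos_neg]] at h
  have h1 : ∑ μ : Fin n, 1 / 2 * Real.log ((1 - r) ^ 2 + r * chord (θ μ - θ μ))
      = n * Real.log (1 - r) := by
    simp [chord]
  rw [h1, ← Finset.mul_sum] at h
  have h2 : regW β ((1 - r) ^ 2 / r) n θ = Real.exp (logW β ((1 - r) ^ 2 / r) n 0 θ) := by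
    rw [exp_logW β _ (by have : 0 < 1 - r := by linarith
                         positivity)]
    simp
  rw [h2, logW]
  congr 1
  rw [energy, h, ← Finset.mul_sum]
  have h3 : ∀ p ∈ pairs n, Real.log (chord (θ p.1 - θ p.2) + (1 - r) ^ 2 / r)
      = Real.log ((1 - r) ^ 2 + r * chord (θ p.1 - θ p.2)) - Real.log r := by
    intro p _
    rw [← Real.log_div (log_arg_pos r hr hr1 _).ne' hr.ne']
    congr 1; field_simp; ring
  rw [Finset.sum_congr rfl h3, Finset.sum_sub_distrib, Finset.sum_const]
  simp only [nsmul_eq_mul, Pi.zero_apply, Finset.sum_const_zero]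
  push_cast
  ring

lemma volume_cube (n : ℕ) : (volume (cbeCube n)).toReal = (2 * Real.pi) ^ n := by
  rw [cbeCube_eq, Real.volume_Icc_pi_toReal (fun _ => by positivity)]
  simp

lemma integral_const_cube (n : ℕ) (c : ℝ) : ∫ _ in cbeCube n, c = (2 * Real.pi) ^ n * c := by
  rw [setIntegral_const, Measure.real, volume_cube, smul_eq_mul]

lemma integrable_cube {E : Type*} [NormedAddCommGroup E] {n : ℕ} {f : (Fin n → ℝ) → E}
    (hf : Continuous f) : IntegrableOn f (cbeCube n) :=
  hf.continuousOn.integrableOn_compact (isCompact_cube n)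

/-- Under the uniform measure `|p_k|²` has mean `n`. -/
lemma integral_psum_sq (n k : ℕ) (hk : 1 ≤ k) :
    ∫ θ in cbeCube n, ‖psum n k θ‖ ^ 2 = (2 * Real.pi) ^ n * n := by
  -- the regularised loop equation at `β = 0`, `V = 0`
  have h := loop_reg 0 1 one_pos n k (-k) (fun _ => 0) (fun _ => 0)
    (fun x => hasDerivAt_const x 0) continuous_const (fun _ => rfl)
  have h1 : ∀ θ : Fin n → ℝ, loopReg 0 1 n k (-k) (fun _ => 0) θ *
      ((Real.exp (∑ μ : Fin n, (fun _ => (0:ℝ)) (θ μ)) * regW 0 1 n θ : ℝ) : ℂ)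
      = Complex.I * k * ((‖psum n k θ‖ ^ 2 - n : ℝ) : ℂ) := by
    intro θ
    simp only [loopReg, regW, psum_neg]
    rw [mul_assoc, Complex.mul_conj']
    simp [psum_zero]
    ring
  simp_rw [h1] at h
  rw [integral_const_mul, integral_complex_ofReal] at h
  have hk' : (k : ℂ) ≠ 0 := by exact_mod_cast (by omega : k ≠ 0)
  have h2 : ∫ θ in cbeCube n, (‖psum n k θ‖ ^ 2 - (n : ℝ)) = 0 := by
    have := (mul_eq_zero.1 h).resolve_left (mul_ne_zero Complex.I_ne_zero hk')
    exact_mod_cast this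
  have hc : Continuous fun θ : Fin n → ℝ => ‖psum n k θ‖ ^ 2 := (continuous_psum n k).norm.pow 2
  rw [integral_sub (integrable_cube hc) (integrable_cube continuous_const),
    integral_const_cube] at h2
  linarith

lemma hasSum_pow_div (r : ℝ) (hr : 0 < r) (hr1 : r < 1) :
    HasSum (fun k : ℕ => r ^ k / k) (-Real.log (1 - r)) := by
  have h := hasSum_energy r hr hr1 1 0
  simpa [psum, norm_em, chord] using h

lemma integral_energy (r : ℝ) (hr : 0 < r) (hr1 : r < 1) (n : ℕ) :
    ∫ θ in cbeCube n, energy r n θ = -((2 * Real.pi) ^ n * n * Real.log (1 - r)) := by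
  have h0 : ∀ k : ℕ, ∫ θ in cbeCube n, r ^ k / k * ‖psum n k θ‖ ^ 2
      = (2 * Real.pi) ^ n * n * (r ^ k / k) := by
    intro k
    rcases Nat.eq_zero_or_pos k with rfl | hk
    · simp
    · rw [integral_const_mul, integral_psum_sq n k hk]; ring
  have hs := (hasSum_pow_div r hr hr1).mul_left ((2 * Real.pi) ^ n * (n : ℝ))
  have h := hasSum_integral_of_summable_integral_norm (μ := volume.restrict (cbeCube n))
    (F := fun (k : ℕ) (θ : Fin n → ℝ) => r ^ k / k * ‖psum n k θ‖ ^ 2)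
    (fun k => integrable_cube (continuous_const.mul ((continuous_psum n k).norm.pow 2))) ?_
  · simp_rw [h0] at h
    unfold energy
    rw [h.unique hs]; ring
  · refine hs.summable.congr fun k => ?_
    rw [← h0]
    refine integral_congr_ae (Eventually.of_forall fun θ => ?_)
    simp only
    rw [Real.norm_of_nonneg (by positivity)]

/-- Jensen's inequality: under the uniform measure the exponent of `regW_eq_exp` has nonnegative
mean. -/
lemma le_integral_regW (β r : ℝ) (hβ : 0 ≤ β) (hr : 0 < r) (hr1 : r < 1) (n : ℕ) :
    (2 * Real.pi) ^ n ≤ ∫ θ in cbeCube n, regW β ((1 - r) ^ 2 / r) n θ := by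
  have hlog : Real.log r ≤ 0 := Real.log_nonpos hr.le hr1.le
  have hc := continuous_energy r hr hr1 n
  have h1 : ∫ θ in cbeCube n, ((1 - β / 2 * (n * Real.log (1 - r))) + (-(β / 2)) * energy r n θ)
      ≤ ∫ θ in cbeCube n, regW β ((1 - r) ^ 2 / r) n θ := by
    refine integral_mono (integrable_cube (by fun_prop)) (integrable_cube
      (continuous_regW _ _ hβ _)) fun θ => ?_
    simp only
    rw [regW_eq_exp β r hr hr1]
    have h2 := Real.add_one_le_exp (β / 2 *
      (-energy r n θ - n * Real.log (1 - r) - (pairs n).card * Real.log r))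
    have h3 : 0 ≤ β / 2 * (-((pairs n).card * Real.log r)) := by
      have : 0 ≤ -((pairs n).card * Real.log r) := by
        rw [← mul_neg]; exact mul_nonneg (by positivity) (by linarith)
      positivity
    linarith
  refine le_trans (le_of_eq ?_) h1
  rw [integral_add (integrable_cube continuous_const) (integrable_cube (by fun_prop)),
    integral_const_cube, integral_const_mul, integral_energy r hr hr1]
  ring

/-- The partition function is at least its value at `β = 0`. -/
lemma le_partition (β : ℝ) (hβ : 0 ≤ β) (n : ℕ) :
    (2 * Real.pi) ^ n ≤ ∫ θ in cbeCube n, cbeWeight β n θ := by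
  have h1 : Tendsto (fun ε => ∫ θ in cbeCube n, regW β ε n θ) (𝓝[>] 0)
      (𝓝 (∫ θ in cbeCube n, cbeWeight β n θ)) := by
    refine tendsto_integral_filter_of_dominated_convergence
      (fun _ => ((5 : ℝ) ^ (β / 2)) ^ (pairs n).card) ?_ ?_ (integrable_cube continuous_const) ?_
    · exact Eventually.of_forall fun ε => (continuous_regW β ε hβ n).aestronglyMeasurable
    · filter_upwards [Ioo_mem_nhdsGT (zero_lt_one' ℝ)] with ε hε
      refine Eventually.of_forall fun θ => ?_
      rw [Real.norm_of_nonneg (regW_nonneg β ε hε.1.le n θ)]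
      exact regW_le β ε hβ hε.1.le hε.2.le n θ
    · exact Eventually.of_forall fun θ => tendsto_regW β hβ n θ
  have hr01 : ∀ᶠ r : ℝ in 𝓝[<] 1, r ∈ Set.Ioo (0:ℝ) 1 := Ioo_mem_nhdsLT one_pos
  have h2 : Tendsto (fun r : ℝ => (1 - r) ^ 2 / r) (𝓝[<] 1) (𝓝[>] 0) := by
    refine tendsto_nhdsWithin_iff.2 ⟨tendsto_nhdsWithin_of_tendsto_nhds ?_, ?_⟩
    · have : ContinuousAt (fun r : ℝ => (1 - r) ^ 2 / r) 1 :=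
        ContinuousAt.div (by fun_prop) (by fun_prop) one_ne_zero
      simpa using this.tendsto
    · filter_upwards [hr01] with r hr
      have := hr.1
      have : 0 < 1 - r := by linarith [hr.2]
      simp only [Set.mem_Ioi]; positivity
  refine ge_of_tendsto (h1.comp h2) ?_
  filter_upwards [hr01] with r hr
  exact le_integral_regW β r hβ hr.1 hr.2 n

lemma card_pairs (n : ℕ) : (n : ℝ) + 2 * (pairs n).card = (n : ℝ) ^ 2 := by
  have h := sum_univ_eq_pairs (n := n) (fun _ _ => (1 : ℝ)) fun _ _ => rfl
  simp at h
  nlinarith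

/-- The `n` lowest modes of the energy, without the damping factor. -/
noncomputable def lowEnergy (n : ℕ) (θ : Fin n → ℝ) : ℝ :=
  ∑ k ∈ Icc 1 n, ‖psum n k θ‖ ^ 2 / k

/-- The density is exponentially small in the low-mode energy. The regularisation parameter is
`r = 1 - 1/n`, so that `r^k ≥ e^{-2}` for `k ≤ n`. -/
lemma cbeWeight_mul_exp_le (β : ℝ) (hβ : 0 ≤ β) (n : ℕ) (hn : 2 ≤ n) (θ : Fin n → ℝ) :
    Real.exp (β / 2 * Real.exp (-2) * lowEnergy n θ) * cbeWeight β n θ ≤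
      Real.exp (β / 2 * (n * Real.log n + n)) := by
  have hn' : (2 : ℝ) ≤ n := by exact_mod_cast hn
  have hn0 : (0 : ℝ) < n := by linarith
  set r : ℝ := 1 - 1 / n with hrdef
  have hinv : 1 / (n : ℝ) ≤ 1 / 2 := one_div_le_one_div_of_le two_pos hn'
  have hinv0 : 0 < 1 / (n : ℝ) := by positivity
  have hr : 0 < r := by linarith
  have hr1 : r < 1 := by linarith
  have hlogr : -(2 / n) ≤ Real.log r := by
    refine le_trans ?_ (Real.one_sub_inv_le_log_of_pos hr)
    have : r⁻¹ ≤ 1 + 2 / n := by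
      rw [inv_le_iff_one_le_mul₀ hr]
      rw [hrdef, show (1 + 2 / (n : ℝ)) = 1 + 2 * (1 / n) by ring]
      nlinarith
    linarith
  have h1 : cbeWeight β n θ ≤ regW β ((1 - r) ^ 2 / r) n θ := by
    rw [cbeWeight_eq]
    refine Finset.prod_le_prod (fun p _ => Real.rpow_nonneg (by simpa using chord_nonneg _) _)
      fun p _ => Real.rpow_le_rpow (by simpa using chord_nonneg _) ?_ (by positivity)
    gcongr; positivity
  have h2 : Real.exp (-2) * lowEnergy n θ ≤ energy r n θ := by
    refine le_trans ?_ ((hasSum_energy r hr hr1 n θ).summable.sum_le_tsum (Icc 1 n)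
      fun k _ => by positivity)
    rw [lowEnergy, Finset.mul_sum]
    refine Finset.sum_le_sum fun k hk => ?_
    have hkn : (k : ℝ) ≤ n := by exact_mod_cast (Finset.mem_Icc.1 hk).2
    have h3 : Real.exp (-2) ≤ r ^ k := by
      rw [← Real.exp_log (pow_pos hr k), Real.log_pow]
      apply Real.exp_le_exp.2
      have h4 : (k : ℝ) * (-(2 / n)) ≤ k * Real.log r := by gcongr
      have h5 : (k : ℝ) * (2 / n) ≤ 2 := by
        rw [mul_div_assoc', div_le_iff₀ hn0]; linarith
      linarith
    calc Real.exp (-2) * (‖psum n k θ‖ ^ 2 / k) ≤ r ^ k * (‖psum n k θ‖ ^ 2 / k) := by gcongr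
      _ = _ := by ring
  have h3 : -((pairs n).card * Real.log r) ≤ n := by
    have hc := card_pairs n
    have h4 : ((pairs n).card : ℝ) * (-(2 / n)) ≤ (pairs n).card * Real.log r := by gcongr
    have h5 : ((pairs n).card : ℝ) * (2 / n) ≤ n := by
      rw [mul_div_assoc', div_le_iff₀ hn0]; nlinarith
    linarith
  have h4 : Real.log (1 - r) = -Real.log n := by
    rw [hrdef, sub_sub_cancel, one_div, Real.log_inv]
  calc _ ≤ Real.exp (β / 2 * Real.exp (-2) * lowEnergy n θ) *
        regW β ((1 - r) ^ 2 / r) n θ := by gcongr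
    _ = Real.exp (β / 2 * (Real.exp (-2) * lowEnergy n θ - energy r n θ
        - n * Real.log (1 - r) - (pairs n).card * Real.log r)) := by
        rw [regW_eq_exp β r hr hr1, ← Real.exp_add]; ring_nf
    _ ≤ _ := by
        apply Real.exp_le_exp.2
        refine mul_le_mul_of_nonneg_left ?_ (by positivity)
        rw [h4]; linarith

end CBE

/-! ### Fourier series of the test function -/

namespace CBE

/-- The Fourier coefficient `(2π)⁻¹ ∫₀^{2π} f(x) e^{-ikx} dx`. -/
noncomputable def fc (f : ℝ → ℝ) (k : ℤ) : ℂ :=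
  (1 / (2 * Real.pi)) * ∫ x in (0:ℝ)..(2 * Real.pi), (f x : ℂ) * em (-k) x

lemma periodic_deriv {f : ℝ → ℝ} {c : ℝ} (hf : Function.Periodic f c) :
    Function.Periodic (deriv f) c := by
  intro x
  rw [← deriv_comp_add_const]
  congr 1
  exact funext hf

lemma fc_deriv {f : ℝ → ℝ} (hper : Function.Periodic f (2 * Real.pi)) (hf : ContDiff ℝ 1 f)
    (k : ℤ) : fc (deriv f) k = Complex.I * k * fc f k := by
  have hd : ∀ x, HasDerivAt f (deriv f x) x := fun x =>
    (hf.differentiable one_ne_zero x).hasDerivAt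
  have hc : Continuous (deriv f) := hf.continuous_deriv le_rfl
  have h1 : ∀ x ∈ Set.uIcc 0 (2 * Real.pi), HasDerivAt (fun x : ℝ => (f x : ℂ) * em (-k) x)
      (((deriv f x : ℝ) : ℂ) * em (-k) x + (f x : ℂ) * (Complex.I * (-k : ℤ) * em (-k) x)) x :=
    fun x _ => (hd x).ofReal_comp.mul (hasDerivAt_em (-k) x)
  have hci : Continuous fun x : ℝ => ((deriv f x : ℝ) : ℂ) * em (-k) x :=
    (Complex.continuous_ofReal.comp hc).mul (continuous_em _)
  have hci2 : Continuous fun x : ℝ => (f x : ℂ) * (Complex.I * (-k : ℤ) * em (-k) x) :=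
    (Complex.continuous_ofReal.comp hf.continuous).mul (continuous_const.mul (continuous_em _))
  have h2 := intervalIntegral.integral_eq_sub_of_hasDerivAt h1
    ((hci.add hci2).intervalIntegrable _ _)
  have h3 : f (2 * Real.pi) = f 0 := by
    have := hper 0
    rwa [zero_add] at this
  have h4 : em (-k) (2 * Real.pi) = em (-k) 0 := by
    have := em_periodic (-k) 0
    rwa [zero_add] at this
  rw [h3, h4, sub_self, intervalIntegral.integral_add (hci.intervalIntegrable _ _)
    (hci2.intervalIntegrable _ _)] at h2
  have h5 : ∫ x in (0:ℝ)..(2 * Real.pi), (f x : ℂ) * (Complex.I * (-k : ℤ) * em (-k) x)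
      = -(Complex.I * k) * ∫ x in (0:ℝ)..(2 * Real.pi), (f x : ℂ) * em (-k) x := by
    rw [← intervalIntegral.integral_const_mul]
    congr 1; ext x; push_cast; ring
  rw [h5] at h2
  unfold fc
  rw [mul_left_comm, eq_neg_of_add_eq_zero_left h2, neg_mul, neg_neg]

lemma norm_fc_le {f : ℝ → ℝ} {C : ℝ} (hf : ∀ x ∈ Set.Icc 0 (2 * Real.pi), |f x| ≤ C) (k : ℤ) :
    ‖fc f k‖ ≤ C := by
  have hpi := Real.pi_pos
  have h := intervalIntegral.norm_integral_le_of_norm_le_const (a := 0) (b := 2 * Real.pi)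
    (f := fun x : ℝ => (f x : ℂ) * em (-k) x) (C := C) (fun x hx => by
      rw [Set.uIoc_of_le (by positivity)] at hx
      rw [norm_mul, norm_em, mul_one, Complex.norm_real]
      exact hf x ⟨hx.1.le, hx.2⟩)
  unfold fc
  rw [norm_mul]
  have h1 : ‖(1 / (2 * Real.pi) : ℂ)‖ = 1 / (2 * Real.pi) := by
    rw [show (1 / (2 * Real.pi) : ℂ) = ((1 / (2 * Real.pi) : ℝ) : ℂ) by push_cast; rfl,
      Complex.norm_real, Real.norm_of_nonneg (by positivity)]
  rw [h1]
  calc _ ≤ 1 / (2 * Real.pi) * (C * |2 * Real.pi - 0|) := by gcongr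
    _ = C := by rw [sub_zero, abs_of_pos (by positivity)]; field_simp

/-- Fourier coefficients of a `C^j` function decay like `k^{-j}`. -/
lemma fc_decay (j : ℕ) : ∀ {f : ℝ → ℝ}, Function.Periodic f (2 * Real.pi) → ContDiff ℝ j f →
    ∃ C : ℝ, ∀ k : ℤ, |(k : ℝ)| ^ j * ‖fc f k‖ ≤ C := by
  induction j with
  | zero =>
    intro f _ hf
    obtain ⟨C, hC⟩ := (isCompact_Icc (a := (0:ℝ)) (b := 2 * Real.pi)).exists_bound_of_continuousOn
      hf.continuous.continuousOn
    exact ⟨C, fun k => by simpa using norm_fc_le (fun x hx => by simpa using hC x hx) k⟩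
  | succ j ih =>
    intro f hper hf
    have hf1 : ContDiff ℝ 1 f := hf.of_le (by exact_mod_cast (by omega : 1 ≤ j + 1))
    have hf2 : ContDiff ℝ j (deriv f) := by
      have : ContDiff ℝ ((j : WithTop ℕ∞) + 1) f := by exact_mod_cast hf
      exact (contDiff_succ_iff_deriv.1 this).2.2
    obtain ⟨C, hC⟩ := ih (periodic_deriv hper) hf2
    refine ⟨C, fun k => ?_⟩
    have h := hC k
    rw [fc_deriv hper hf1, norm_mul, norm_mul, Complex.norm_I, one_mul, Complex.norm_intCast] at h
    rw [pow_succ, mul_assoc]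
    exact h

lemma summable_fc {f : ℝ → ℝ} (hper : Function.Periodic f (2 * Real.pi)) (hf : ContDiff ℝ 4 f) :
    Summable fun k : ℤ => |(k : ℝ)| ^ 2 * ‖fc f k‖ := by
  obtain ⟨C, hC⟩ := fc_decay 4 hper hf
  have hs : Summable fun k : ℤ => C * (1 / (k : ℝ) ^ 2) :=
    (Real.summable_one_div_int_pow.2 one_lt_two).mul_left C
  refine Summable.of_nonneg_of_le (fun k => by positivity) (fun k => ?_) hs
  rcases eq_or_ne k 0 with rfl | hk
  · simp
  · have hk' : 0 < |(k : ℝ)| := by positivity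
    have h := hC k
    rw [mul_one_div, le_div_iff₀ (by positivity)]
    calc _ = |(k : ℝ)| ^ 4 * ‖fc f k‖ := by rw [← sq_abs (k : ℝ)]; ring
      _ ≤ C := h

lemma fc_neg (f : ℝ → ℝ) (k : ℤ) : fc f (-k) = (starRingEnd ℂ) (fc f k) := by
  unfold fc
  rw [map_mul, intervalIntegral.integral_of_le (by positivity),
    intervalIntegral.integral_of_le (by positivity), ← integral_conj]
  congr 1
  · rw [map_div₀, map_mul, map_one, Complex.conj_ofReal, Complex.conj_ofNat]
  · congr 1; ext x
    rw [map_mul, Complex.conj_ofReal, em_neg (-k)]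

lemma hasSum_fc {f : ℝ → ℝ} (hper : Function.Periodic f (2 * Real.pi)) (hf : ContDiff ℝ 4 f)
    (x : ℝ) : HasSum (fun k : ℤ => fc f k * em k x) (f x) := by
  have hT : Fact (0 < 2 * Real.pi) := ⟨by positivity⟩
  have hperC : Function.Periodic (fun x => (f x : ℂ)) (2 * Real.pi) := fun x => by
    simp only [hper x]
  have hcF : Continuous hperC.lift :=
    continuous_coinduced_dom.mpr (Complex.continuous_ofReal.comp hf.continuous)
  let F : C(AddCircle (2 * Real.pi), ℂ) := ⟨hperC.lift, hcF⟩
  have hfour : ∀ (k : ℤ) (x : ℝ), fourier k (x : AddCircle (2 * Real.pi)) = em k x := by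
    intro k x
    have hpi : (Real.pi : ℂ) ≠ 0 := by exact_mod_cast Real.pi_ne_zero
    rw [fourier_coe_apply, em]
    congr 1
    push_cast
    field_simp
  have hco : ∀ k, fourierCoeff F k = fc f k := by
    intro k
    rw [fourierCoeff_eq_intervalIntegral _ _ 0, fc, zero_add]
    rw [Complex.real_smul]
    congr 1
    · push_cast; rfl
    · congr 1; ext x
      rw [hfour, smul_eq_mul, mul_comm]
      rfl
  have hs : Summable (fourierCoeff F) := by
    have h1 := summable_fc hper hf
    refine Summable.of_norm_bounded_eventually h1 ?_
    have : ({0}ᶜ : Set ℤ) ∈ (cofinite : Filter ℤ) := (Set.finite_singleton 0).compl_mem_cofinite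
    filter_upwards [this] with k hk
    rw [hco]
    have hk : k ≠ 0 := hk
    have : (1:ℝ) ≤ |(k : ℝ)| := by exact_mod_cast Int.one_le_abs hk
    exact le_mul_of_one_le_left (norm_nonneg _) (one_le_pow₀ this)
  have h := has_pointwise_sum_fourier_series_of_summable hs (x : AddCircle (2 * Real.pi))
  simp only [hco, hfour, smul_eq_mul] at h
  exact h

/-- The Fourier data of a test function used in the probabilistic part: `G` is the sum of its
real Fourier series `∑ 2 Re(c_k e^{ikx})`, which can be differentiated termwise. -/
structure FourierData (G G' : ℝ → ℝ) (c : ℕ → ℂ) : Prop where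
  zero : c 0 = 0
  summable : Summable fun k : ℕ => (k : ℝ) ^ 2 * ‖c k‖
  hasSum : ∀ x, HasSum (fun k : ℕ => 2 * (c k * em k x).re) (G x)
  hasSum' : ∀ x, HasSum (fun k : ℕ => 2 * (Complex.I * k * c k * em k x).re) (G' x)
  hasDeriv : ∀ x, HasDerivAt G (G' x) x
  cont : Continuous G'
  periodic : Function.Periodic G (2 * Real.pi)

lemma fourierData {G : ℝ → ℝ} (hper : Function.Periodic G (2 * Real.pi)) (hG : ContDiff ℝ 4 G)
    (hmean : ∫ θ in (0:ℝ)..(2 * Real.pi), G θ = 0) :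
    FourierData G (deriv G) (fun k => fc G k) := by
  have h0 : fc G 0 = 0 := by
    unfold fc
    simp only [neg_zero, em_zero, mul_one]
    rw [intervalIntegral.integral_ofReal, hmean]; simp
  have hsumN : Summable fun k : ℕ => (k : ℝ) ^ 2 * ‖fc G k‖ := by
    have := (summable_fc hper hG).comp_injective (i := fun k : ℕ => (k : ℤ)) Nat.cast_injective
    simpa [Function.comp_def] using this
  have hG1 : ∀ x, HasSum (fun k : ℕ => 2 * (fc G k * em k x).re) (G x) := by
    intro x
    have h := (hasSum_fc hper hG x).nat_add_neg
    rw [h0, zero_mul, add_zero] at h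
    have h2 := Complex.reCLM.hasSum h
    simp only [Complex.reCLM_apply, Complex.ofReal_re] at h2
    refine h2.congr_fun fun k => ?_
    rw [fc_neg, em_neg, ← map_mul, Complex.add_re, Complex.conj_re]
    ring
  have hd : ∀ x, HasDerivAt G (deriv G x) x := fun x =>
    (hG.differentiable (by norm_num) x).hasDerivAt
  have hb : Summable fun k : ℕ => 2 * ((k : ℝ) * ‖fc G k‖) := by
    refine (Summable.of_nonneg_of_le (fun k => by positivity) (fun k => ?_) hsumN).mul_left 2
    gcongr
    exact_mod_cast Nat.le_self_pow two_ne_zero k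
  have hbd : ∀ (k : ℕ) (x : ℝ), ‖2 * (Complex.I * k * fc G k * em k x).re‖
      ≤ 2 * ((k : ℝ) * ‖fc G k‖) := by
    intro k x
    rw [norm_mul, Real.norm_ofNat]
    gcongr
    refine (Complex.abs_re_le_norm _).trans ?_
    simp [norm_em]
  refine ⟨by simpa using h0, hsumN, hG1, fun x => ?_, hd, hG.continuous_deriv (by norm_num), hper⟩
  have hs : Summable (fun k : ℕ => 2 * (Complex.I * k * fc G k * em k x).re) :=
    Summable.of_norm_bounded hb (fun k => hbd k x)
  have hder := hasDerivAt_tsum (g := fun (k : ℕ) (x : ℝ) => 2 * (fc G k * em k x).re)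
    (g' := fun (k : ℕ) (x : ℝ) => 2 * (Complex.I * k * fc G k * em k x).re) (y₀ := 0) hb
    (fun k y => by
      have h1 := ((hasDerivAt_em k y).const_mul (fc G k))
      have h2 := (Complex.reCLM.hasFDerivAt.comp_hasDerivAt y h1).const_mul 2
      have h3 : Complex.I * k * fc G k * em k y = fc G k * (Complex.I * (k : ℤ) * em k y) := by
        push_cast; ring
      rw [h3]
      exact h2) hbd (hG1 0).summable x
  have : (fun z => ∑' k : ℕ, 2 * (fc G k * em k z).re) = G := funext fun z => (hG1 z).tsum_eq
  rw [this] at hder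
  rw [hder.unique (hd x) |>.symm]
  exact hs.hasSum

lemma fc_eq (G : ℝ → ℝ) (hc : Continuous G) (k : ℕ) : fc G k =
    (((1 / Real.pi) * ∫ θ in (0:ℝ)..(2 * Real.pi), G θ * Real.cos (k * θ) : ℝ) -
      Complex.I * ((1 / Real.pi) * ∫ θ in (0:ℝ)..(2 * Real.pi), G θ * Real.sin (k * θ) : ℝ)) / 2 := by
  have h : ∀ x : ℝ, (G x : ℂ) * em (-k) x =
      ((G x * Real.cos (k * x) : ℝ) : ℂ) - Complex.I * ((G x * Real.sin (k * x) : ℝ) : ℂ) := by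
    intro x
    rw [em, show Complex.I * ((-k : ℤ) : ℂ) * x = ((-(k * x) : ℝ) : ℂ) * Complex.I by
      push_cast; ring, Complex.exp_mul_I, ← Complex.ofReal_cos, ← Complex.ofReal_sin,
      Real.cos_neg, Real.sin_neg]
    push_cast; ring
  unfold fc
  simp_rw [h]
  rw [intervalIntegral.integral_sub, intervalIntegral.integral_const_mul,
    intervalIntegral.integral_ofReal, intervalIntegral.integral_ofReal]
  · push_cast; ring
  · exact Continuous.intervalIntegrable (by fun_prop) _ _
  · exact Continuous.intervalIntegrable (by fun_prop) _ _

end CBE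

/-! ### Tilted ensembles -/

namespace CBE

/-- The density of the circular ensemble tilted by the linear statistic of `V`. -/
noncomputable def tw (β : ℝ) (n : ℕ) (V : ℝ → ℝ) (θ : Fin n → ℝ) : ℝ :=
  Real.exp (∑ μ, V (θ μ)) * cbeWeight β n θ

/-- The partition function of the tilted ensemble. -/
noncomputable def tZ (β : ℝ) (n : ℕ) (V : ℝ → ℝ) : ℝ := ∫ θ in cbeCube n, tw β n V θ

/-- The circular ensemble tilted by the linear statistic of `V`, as a probability measure. -/
noncomputable def tm (β : ℝ) (n : ℕ) (V : ℝ → ℝ) : Measure (Fin n → ℝ) :=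
  (volume.restrict (cbeCube n)).withDensity
    fun θ => ((tw β n V θ / tZ β n V).toNNReal : ENNReal)

lemma tw_nonneg (β : ℝ) (n : ℕ) (V : ℝ → ℝ) (θ : Fin n → ℝ) : 0 ≤ tw β n V θ :=
  mul_nonneg (Real.exp_pos _).le (cbeWeight_nonneg _ _ _)

lemma continuous_tw (β : ℝ) (hβ : 0 ≤ β) (n : ℕ) {V : ℝ → ℝ} (hV : Continuous V) :
    Continuous (tw β n V) := by
  have h := continuous_cbeWeight β hβ n
  unfold tw
  fun_prop

lemma le_tZ (β : ℝ) (hβ : 0 ≤ β) (n : ℕ) {V : ℝ → ℝ} (hV : Continuous V) {g : ℝ}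
    (hg : ∀ x, |V x| ≤ g) : Real.exp (-(n * g)) * (2 * Real.pi) ^ n ≤ tZ β n V := by
  calc _ ≤ Real.exp (-(n * g)) * ∫ θ in cbeCube n, cbeWeight β n θ := by
        gcongr; exact le_partition β hβ n
    _ = ∫ θ in cbeCube n, Real.exp (-(n * g)) * cbeWeight β n θ := (integral_const_mul _ _).symm
    _ ≤ _ := by
        refine integral_mono (integrable_cube (continuous_const.mul (continuous_cbeWeight β hβ n)))
          (integrable_cube (continuous_tw β hβ n hV)) fun θ => ?_
        refine mul_le_mul_of_nonneg_right (Real.exp_le_exp.2 ?_) (cbeWeight_nonneg _ _ _)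
        have : ∑ μ : Fin n, (-g) ≤ ∑ μ, V (θ μ) :=
          Finset.sum_le_sum fun μ _ => (abs_le.1 (hg (θ μ))).1
        simpa using this

lemma tZ_pos (β : ℝ) (hβ : 0 ≤ β) (n : ℕ) {V : ℝ → ℝ} (hV : Continuous V) {g : ℝ}
    (hg : ∀ x, |V x| ≤ g) : 0 < tZ β n V :=
  lt_of_lt_of_le (by positivity) (le_tZ β hβ n hV hg)

lemma integral_tm {E : Type*} [NormedAddCommGroup E] [NormedSpace ℝ E]
    (β : ℝ) (hβ : 0 ≤ β) (n : ℕ) {V : ℝ → ℝ} (hV : Continuous V) (f : (Fin n → ℝ) → E) :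
    ∫ θ, f θ ∂(tm β n V) = (tZ β n V)⁻¹ • ∫ θ in cbeCube n, tw β n V θ • f θ := by
  have hm : Measurable fun θ => (tw β n V θ / tZ β n V).toNNReal :=
    ((continuous_tw β hβ n hV).div_const _).measurable.real_toNNReal
  unfold tm
  rw [integral_withDensity_eq_integral_smul hm, ← integral_smul]
  refine integral_congr_ae (Eventually.of_forall fun θ => ?_)
  have hz : 0 ≤ tZ β n V := integral_nonneg fun θ => tw_nonneg _ _ _ _
  simp only [NNReal.smul_def]
  rw [Real.coe_toNNReal _ (div_nonneg (tw_nonneg _ _ _ _) hz), smul_smul, div_eq_inv_mul]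

lemma isProb_tm (β : ℝ) (hβ : 0 ≤ β) (n : ℕ) {V : ℝ → ℝ} (hV : Continuous V) {g : ℝ}
    (hg : ∀ x, |V x| ≤ g) : IsProbabilityMeasure (tm β n V) := by
  have hz := tZ_pos β hβ n hV hg
  constructor
  unfold tm
  rw [withDensity_apply _ MeasurableSet.univ, Measure.restrict_univ]
  have h : ∫⁻ θ in cbeCube n, ENNReal.ofReal (tw β n V θ / tZ β n V)
      = ENNReal.ofReal (∫ θ in cbeCube n, tw β n V θ / tZ β n V) :=
    (ofReal_integral_eq_lintegral_ofReal
      (integrable_cube ((continuous_tw β hβ n hV).div_const _))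
      (Eventually.of_forall fun θ => div_nonneg (tw_nonneg _ _ _ _) hz.le)).symm
  have h2 : ∫ θ in cbeCube n, tw β n V θ / tZ β n V = 1 := by
    rw [integral_div]; exact div_self hz.ne'
  rw [h2, ENNReal.ofReal_one] at h
  exact h

/-- The properties of the tilted measures that drive the moment estimates: the loop equations
and a crude a priori bound on the energy of the low modes. -/
structure Tilt (β K : ℝ) (G' : ℝ → ℝ) (n : ℕ) (t : ℝ) (P : Measure (Fin n → ℝ)) : Prop where
  prob : IsProbabilityMeasure P
  loop : ∀ k : ℕ, 1 ≤ k → ∀ m : ℤ, ∫ θ, loopInt β n k m (fun x => t * G' x) θ ∂P = 0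
  energy : 2 ≤ n → ∫ θ, lowEnergy n θ ∂P ≤ K * (n * (1 + Real.log n))

lemma continuous_lowEnergy (n : ℕ) : Continuous (lowEnergy n) := by
  unfold lowEnergy
  exact continuous_finsetSum _ fun k _ => ((continuous_psum n k).norm.pow 2).div_const _

/-- The a priori energy bound: by the elementary inequality `x ≤ A + e^{x-A}`, the
exponential moment bound on the energy controls its mean. -/
lemma energy_bound (β : ℝ) (hβ : 0 < β) (n : ℕ) (hn : 2 ≤ n) {V : ℝ → ℝ} (hV : Continuous V)
    {g : ℝ} (hg : ∀ x, |V x| ≤ g) :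
    ∫ θ, lowEnergy n θ ∂(tm β n V) ≤
      (2 / β * Real.exp 2 * (2 * g + β / 2 + 1)) * (n * (1 + Real.log n)) := by
  have hprob := isProb_tm β hβ.le n hV hg
  have hz := tZ_pos β hβ.le n hV hg
  have hg0 : 0 ≤ g := (abs_nonneg _).trans (hg 0)
  have hn' : (2:ℝ) ≤ n := by exact_mod_cast hn
  have hlog : 0 ≤ Real.log n := Real.log_nonneg (by linarith)
  set A : ℝ := 2 * (n * g) + β / 2 * (n * Real.log n + n) with hA
  set X : (Fin n → ℝ) → ℝ := fun θ => β / 2 * Real.exp (-2) * lowEnergy n θ with hX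
  have hXc : Continuous X := continuous_const.mul (continuous_lowEnergy n)
  have hle : ∀ θ, tw β n V θ • X θ ≤
      A * tw β n V θ + Real.exp (-A) * Real.exp (n * g + β / 2 * (n * Real.log n + n)) := by
    intro θ
    have h1 : X θ - A ≤ Real.exp (X θ - A) := by linarith [Real.add_one_le_exp (X θ - A)]
    have h2 : Real.exp (∑ μ, V (θ μ)) ≤ Real.exp (n * g) := by
      refine Real.exp_le_exp.2 ?_
      have : ∑ μ, V (θ μ) ≤ ∑ μ : Fin n, g :=
        Finset.sum_le_sum fun μ _ => (abs_le.1 (hg (θ μ))).2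
      simpa using this
    have h3 : tw β n V θ * Real.exp (X θ) ≤
        Real.exp (n * g + β / 2 * (n * Real.log n + n)) := by
      rw [Real.exp_add]
      calc _ = Real.exp (∑ μ, V (θ μ)) * (Real.exp (X θ) * cbeWeight β n θ) := by unfold tw; ring
        _ ≤ _ := mul_le_mul h2 (cbeWeight_mul_exp_le β hβ.le n hn θ)
          (mul_nonneg (Real.exp_pos _).le (cbeWeight_nonneg _ _ _)) (Real.exp_pos _).le
    calc tw β n V θ • X θ = A * tw β n V θ + tw β n V θ * (X θ - A) := by
          rw [smul_eq_mul]; ring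
      _ ≤ A * tw β n V θ + tw β n V θ * Real.exp (X θ - A) := by
          gcongr; exact tw_nonneg _ _ _ _
      _ = A * tw β n V θ + Real.exp (-A) * (tw β n V θ * Real.exp (X θ)) := by
          rw [sub_eq_add_neg, Real.exp_add]; ring
      _ ≤ _ := by gcongr
  have htc := continuous_tw β hβ.le n hV
  have h4 : ∫ θ in cbeCube n, tw β n V θ • X θ ≤ A * tZ β n V + tZ β n V := by
    calc _ ≤ ∫ θ in cbeCube n, (A * tw β n V θ +
          Real.exp (-A) * Real.exp (n * g + β / 2 * (n * Real.log n + n))) :=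
          integral_mono (integrable_cube (htc.smul hXc)) (integrable_cube (by fun_prop)) hle
      _ = A * tZ β n V + (2 * Real.pi) ^ n *
          (Real.exp (-A) * Real.exp (n * g + β / 2 * (n * Real.log n + n))) := by
          rw [integral_add (integrable_cube (by fun_prop)) (integrable_cube continuous_const),
            integral_const_mul, integral_const_cube]; rfl
      _ ≤ _ := by
          gcongr
          refine le_trans (le_of_eq ?_) (le_tZ β hβ.le n hV hg)
          rw [← Real.exp_add, mul_comm]
          congr 2
          rw [hA]; ring
  have h5 : ∫ θ, X θ ∂(tm β n V) ≤ A + 1 := by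
    rw [integral_tm β hβ.le n hV, smul_eq_mul, inv_mul_le_iff₀ hz]
    linarith
  rw [hX, integral_const_mul] at h5
  have h6 : ∫ θ, lowEnergy n θ ∂(tm β n V) ≤ 2 / β * Real.exp 2 * (A + 1) := by
    have he : Real.exp 2 * Real.exp (-2) = 1 := by rw [← Real.exp_add]; simp
    calc _ = (2 / β * Real.exp 2) * (β / 2 * Real.exp (-2) * ∫ θ, lowEnergy n θ ∂(tm β n V)) := by
          have : (2 / β * Real.exp 2) * (β / 2 * Real.exp (-2)) = 1 := by
            field_simp; linarith
          rw [← mul_assoc, this, one_mul]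
      _ ≤ _ := by gcongr
  refine h6.trans ?_
  rw [mul_assoc (2 / β * Real.exp 2)]
  gcongr
  rw [hA]
  have h7 : 0 ≤ n * g * Real.log n := by positivity
  nlinarith [mul_nonneg (by linarith : (0:ℝ) ≤ n) hlog]

lemma tilt_tm (β : ℝ) (hβ : 0 < β) (n : ℕ) {G G' : ℝ → ℝ} {g : ℝ} (hg : ∀ x, |G x| ≤ g)
    (hG : ∀ x, HasDerivAt G (G' x) x) (hG' : Continuous G')
    (hper : Function.Periodic G (2 * Real.pi)) {t : ℝ} (ht : |t| ≤ 1) :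
    Tilt β (2 / β * Real.exp 2 * (2 * g + β / 2 + 1)) G' n t (tm β n fun x => t * G x) := by
  have hGc : Continuous G := continuous_iff_continuousAt.2 fun x => (hG x).continuousAt
  have hVc : Continuous fun x => t * G x := continuous_const.mul hGc
  have hVg : ∀ x, |t * G x| ≤ g := fun x => by
    rw [abs_mul]
    exact (mul_le_of_le_one_left (abs_nonneg _) ht).trans (hg x)
  refine ⟨isProb_tm β hβ.le n hVc hVg, fun k hk m => ?_, fun hn => energy_bound β hβ n hn hVc hVg⟩
  rw [integral_tm β hβ.le n hVc]
  have h := loop_eq β hβ n k hk m (fun x => t * G x) (fun x => t * G' x)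
    (fun x => (hG x).const_mul t) (continuous_const.mul hG') (fun x => by simp only [hper x])
  have h2 : ∫ θ in cbeCube n, tw β n (fun x => t * G x) θ •
      loopInt β n k m (fun x => t * G' x) θ = 0 := by
    rw [← h]
    refine integral_congr_ae (Eventually.of_forall fun θ => ?_)
    simp only [Complex.real_smul, tw]
    ring
  rw [h2, smul_zero]

end CBE

/-! ### Moment bounds for the power sums -/

namespace CBE

/-- `S_k = ∑_{1 ≤ j < k} E|p_j|²`. -/
noncomputable def mS (n : ℕ) (P : Measure (Fin n → ℝ)) (k : ℕ) : ℝ :=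
  ∑ j ∈ Ico 1 k, ∫ θ, ‖psum n j θ‖ ^ 2 ∂P

lemma integrable_bdd {E : Type*} [NormedAddCommGroup E] [SecondCountableTopology E]
    {n : ℕ} {P : Measure (Fin n → ℝ)}
    [IsProbabilityMeasure P] {f : (Fin n → ℝ) → E} (hf : Continuous f) {C : ℝ}
    (hC : ∀ θ, ‖f θ‖ ≤ C) : Integrable f P :=
  Integrable.of_bound hf.aestronglyMeasurable C (Eventually.of_forall hC)

lemma integrable_psum_sq {n : ℕ} (P : Measure (Fin n → ℝ)) [IsProbabilityMeasure P] (m : ℤ) :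
    Integrable (fun θ => ‖psum n m θ‖ ^ 2) P := by
  refine integrable_bdd ((continuous_psum n m).norm.pow 2) (C := (n:ℝ) ^ 2) fun θ => ?_
  rw [norm_pow, norm_norm]
  gcongr; exact norm_psum_le n m θ

lemma integrable_psum {n : ℕ} (P : Measure (Fin n → ℝ)) [IsProbabilityMeasure P] (m : ℤ) :
    Integrable (psum n m) P :=
  integrable_bdd (continuous_psum n m) (norm_psum_le n m)

lemma norm_quad_le (n k : ℕ) (θ : Fin n → ℝ) :
    ‖quad n k θ‖ ≤ ∑ j ∈ Ico 1 k, ‖psum n j θ‖ ^ 2 := by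
  have h1 : ∑ j ∈ Ico 1 k, ‖psum n ((k - j : ℕ) : ℤ) θ‖ ^ 2 = ∑ j ∈ Ico 1 k, ‖psum n j θ‖ ^ 2 := by
    refine Finset.sum_bij' (fun j _ => k - j) (fun j _ => k - j) ?_ ?_ ?_ ?_ ?_ <;>
      intro j hj <;> simp only [Finset.mem_Ico] at * <;> omega
  calc _ ≤ ∑ j ∈ Ico 1 k, ‖psum n j θ * psum n ((k - j : ℕ) : ℤ) θ‖ := norm_sum_le _ _
    _ ≤ ∑ j ∈ Ico 1 k, (‖psum n j θ‖ ^ 2 + ‖psum n ((k - j : ℕ) : ℤ) θ‖ ^ 2) / 2 := by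
        refine Finset.sum_le_sum fun j _ => ?_
        rw [norm_mul]
        nlinarith [sq_nonneg (‖psum n j θ‖ - ‖psum n ((k - j : ℕ) : ℤ) θ‖)]
    _ = _ := by rw [← Finset.sum_div, Finset.sum_add_distrib, h1]; ring

lemma norm_linstat_le {n : ℕ} {V' : ℝ → ℝ} {B : ℝ} (hB : ∀ x, |V' x| ≤ B) (k : ℤ)
    (θ : Fin n → ℝ) : ‖∑ μ, (V' (θ μ) : ℂ) * em k (θ μ)‖ ≤ n * B := by
  refine (norm_sum_le _ _).trans ?_
  calc _ ≤ ∑ μ : Fin n, B := Finset.sum_le_sum fun μ _ => by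
        rw [norm_mul, norm_em, mul_one, Complex.norm_real]; exact hB _
    _ = _ := by simp

lemma continuous_linstat {n : ℕ} {V' : ℝ → ℝ} (hV' : Continuous V') (k : ℤ) :
    Continuous fun θ : Fin n → ℝ => ∑ μ, (V' (θ μ) : ℂ) * em k (θ μ) := by
  have := continuous_em k
  fun_prop

lemma continuous_loopInt (β : ℝ) (n k : ℕ) (m : ℤ) {V' : ℝ → ℝ} (hV' : Continuous V') :
    Continuous (loopInt β n k m V') := by
  have h1 := continuous_psum n k
  have h2 := continuous_psum n m
  have h3 := continuous_psum n (k + m)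
  have h4 := continuous_quad n k
  have h5 := continuous_linstat (n := n) hV' k
  unfold loopInt
  fun_prop

/-- Pointwise lower bound for the imaginary part of the loop integrand with `m = -k`. -/
lemma le_loopInt_im (β : ℝ) (hβ : 0 < β) (n k : ℕ) {V' : ℝ → ℝ} {B : ℝ} (hB : ∀ x, |V' x| ≤ B)
    (hk : k * |β / 2 - 1| ≤ β / 4 * n) (θ : Fin n → ℝ) :
    n * (β / 8 * ‖psum n k θ‖ ^ 2 - k - 2 * B ^ 2 / β - β / 2 * ∑ j ∈ Ico 1 k, ‖psum n j θ‖ ^ 2)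
      ≤ (loopInt β n k (-k) V' θ).im := by
  set p := psum n k θ with hp
  set T := ∑ μ, (V' (θ μ) : ℂ) * em k (θ μ) with hT
  set Q := quad n k θ with hQ
  have e1 : loopInt β n k (-k) V' θ = Complex.I * (((β / 2 * n - (β / 2 - 1) * k) * ‖p‖ ^ 2
      - k * n : ℝ) : ℂ) + (starRingEnd ℂ) p * (T + (β / 2 : ℝ) * Complex.I * Q) := by
    have h1 : p * (starRingEnd ℂ) p = ((‖p‖ ^ 2 : ℝ) : ℂ) := by
      rw [Complex.mul_conj']; push_cast; rfl
    unfold loopInt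
    rw [psum_neg, ← hp, ← hT, ← hQ, add_neg_cancel, psum_zero]
    push_cast at h1 ⊢
    linear_combination (Complex.I * k + β / 2 * Complex.I * n - β / 2 * Complex.I * k) * h1
  have hTn : ‖T‖ ≤ n * B := norm_linstat_le hB k θ
  have hQn := norm_quad_le n k θ
  rw [← hQ] at hQn
  have hpn : ‖p‖ ≤ n := norm_psum_le n k θ
  set q := ∑ j ∈ Ico 1 k, ‖psum n j θ‖ ^ 2 with hq
  have h2 : -(‖p‖ * (n * B) + n * (β / 2 * q)) ≤
      ((starRingEnd ℂ) p * (T + (β / 2 : ℝ) * Complex.I * Q)).im := by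
    have h3 := (abs_le.1 (Complex.abs_im_le_norm
      ((starRingEnd ℂ) p * (T + (β / 2 : ℝ) * Complex.I * Q)))).1
    refine le_trans (neg_le_neg ?_) h3
    rw [norm_mul, Complex.norm_conj]
    have h4 : ‖T + (β / 2 : ℝ) * Complex.I * Q‖ ≤ n * B + β / 2 * q := by
      refine (norm_add_le _ _).trans ?_
      rw [norm_mul, norm_mul, Complex.norm_I, mul_one, Complex.norm_real,
        Real.norm_of_nonneg (by positivity)]
      gcongr
    have hq0 : 0 ≤ q := (norm_nonneg _).trans hQn
    calc _ ≤ ‖p‖ * (n * B + β / 2 * q) := by gcongr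
      _ ≤ ‖p‖ * (n * B) + n * (β / 2 * q) := by
          rw [mul_add]; gcongr
  have h5 : (Complex.I * (((β / 2 * n - (β / 2 - 1) * k) * ‖p‖ ^ 2 - k * n : ℝ) : ℂ)).im
      = (β / 2 * n - (β / 2 - 1) * k) * ‖p‖ ^ 2 - k * n := by
    rw [Complex.I_mul_im, Complex.ofReal_re]
  rw [e1, Complex.add_im, h5]
  have h6 : (β / 2 - 1) * k ≤ β / 4 * n :=
    le_trans (by rw [mul_comm]; gcongr; exact le_abs_self _) hk
  have h7 : (β / 4 * n) * ‖p‖ ^ 2 ≤ (β / 2 * n - (β / 2 - 1) * k) * ‖p‖ ^ 2 := by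
    gcongr; linarith
  have h8 : ‖p‖ * B ≤ β / 8 * ‖p‖ ^ 2 + 2 * B ^ 2 / β := by
    have : β / 8 * ‖p‖ ^ 2 + 2 * B ^ 2 / β - ‖p‖ * B = (β * ‖p‖ - 4 * B) ^ 2 / (8 * β) := by
      field_simp; ring
    have h9 : 0 ≤ (β * ‖p‖ - 4 * B) ^ 2 / (8 * β) := by positivity
    linarith
  have h10 := mul_le_mul_of_nonneg_left h8 (Nat.cast_nonneg (α := ℝ) n)
  nlinarith

variable {β K B t : ℝ} {G' : ℝ → ℝ} {n : ℕ} {P : Measure (Fin n → ℝ)}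

lemma mul_abs_le (hB : ∀ x, |G' x| ≤ B) (ht : |t| ≤ 1) (x : ℝ) : |t * G' x| ≤ B := by
  rw [abs_mul]
  exact (mul_le_of_le_one_left (abs_nonneg _) ht).trans (hB x)

lemma integrable_quad (P : Measure (Fin n → ℝ)) [IsProbabilityMeasure P] (k : ℕ) :
    Integrable (quad n k) P := by
  refine integrable_bdd (continuous_quad n k) (C := ∑ j ∈ Ico 1 k, (n:ℝ) ^ 2) fun θ =>
    (norm_quad_le n k θ).trans (Finset.sum_le_sum fun j _ => ?_)
  gcongr; exact norm_psum_le n j θ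

lemma integrable_linstat (P : Measure (Fin n → ℝ)) [IsProbabilityMeasure P]
    (hc : Continuous G') (hB : ∀ x, |G' x| ≤ B) (k : ℤ) :
    Integrable (fun θ : Fin n → ℝ => ∑ μ, (G' (θ μ) : ℂ) * em k (θ μ)) P :=
  integrable_bdd (continuous_linstat hc k) (norm_linstat_le hB k)

lemma integrable_loopInt (P : Measure (Fin n → ℝ)) [IsProbabilityMeasure P] (β : ℝ) (k : ℕ) (m : ℤ)
    (hc : Continuous G') (hB : ∀ x, |G' x| ≤ B) : Integrable (loopInt β n k m G') P := by
  have hq : ∀ θ, ‖quad n k θ‖ ≤ ∑ j ∈ Ico 1 k, (n:ℝ) ^ 2 := fun θ =>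
    (norm_quad_le n k θ).trans (Finset.sum_le_sum fun j _ => by
      gcongr; exact norm_psum_le n j θ)
  refine integrable_bdd (continuous_loopInt β n k m hc) (C := k * n * n + |(m:ℝ)| * n +
    n * (n * B + |β / 2| * (n * n + ∑ j ∈ Ico 1 k, (n:ℝ) ^ 2 + k * n))) fun θ => ?_
  have hB0 : 0 ≤ B := (abs_nonneg _).trans (hB 0)
  have h1 := norm_psum_le n k θ
  have h2 := norm_psum_le n m θ
  have h3 := norm_psum_le n (k + m) θ
  have h4 := norm_linstat_le (n := n) hB k θ
  have hb : ‖(β / 2 : ℂ)‖ = |β / 2| := by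
    rw [show (β / 2 : ℂ) = ((β / 2 : ℝ) : ℂ) by push_cast; rfl, Complex.norm_real]; rfl
  unfold loopInt
  refine (norm_add_le _ _).trans (add_le_add ((norm_add_le _ _).trans (add_le_add ?_ ?_)) ?_)
  · simp only [norm_mul, Complex.norm_I, one_mul, Complex.norm_natCast]
    gcongr
  · simp only [norm_mul, Complex.norm_I, one_mul, Complex.norm_intCast]
    gcongr
  · rw [norm_mul]
    refine mul_le_mul h2 ((norm_add_le _ _).trans (add_le_add h4 ?_)) (norm_nonneg _)
      (Nat.cast_nonneg _)
    rw [norm_mul, norm_mul, Complex.norm_I, mul_one, hb]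
    refine mul_le_mul_of_nonneg_left ((norm_sub_le _ _).trans (add_le_add
      ((norm_add_le _ _).trans (add_le_add ?_ (hq θ))) ?_)) (abs_nonneg _)
    · rw [norm_mul, Complex.norm_natCast]; gcongr
    · rw [norm_mul, Complex.norm_natCast]; gcongr

/-- The recursive inequality for second moments, from the loop equation with `m = -k`. -/
lemma Tilt.moment_le (h : Tilt β K G' n t P) (hβ : 0 < β) (hc : Continuous G')
    (hB : ∀ x, |G' x| ≤ B) (ht : |t| ≤ 1) (hn : 1 ≤ n) {k : ℕ} (hk1 : 1 ≤ k)
    (hk : k * |β / 2 - 1| ≤ β / 4 * n) :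
    ∫ θ, ‖psum n k θ‖ ^ 2 ∂P ≤ 8 / β * (1 + 2 * B ^ 2 / β) * k + 4 * mS n P k := by
  have := h.prob
  have hn' : (0:ℝ) < n := by exact_mod_cast hn
  have hk1' : (1:ℝ) ≤ k := by exact_mod_cast hk1
  have hVc : Continuous fun x => t * G' x := continuous_const.mul hc
  have hi := integrable_loopInt P β k (-k) hVc (mul_abs_le hB ht)
  have hsq : Integrable (fun θ => ∑ j ∈ Ico 1 k, ‖psum n j θ‖ ^ 2) P :=
    integrable_finsetSum _ fun j _ => integrable_psum_sq P j
  have h1 : ∫ θ, n * (β / 8 * ‖psum n k θ‖ ^ 2 - k - 2 * B ^ 2 / β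
      - β / 2 * ∑ j ∈ Ico 1 k, ‖psum n j θ‖ ^ 2) ∂P
      ≤ ∫ θ, (loopInt β n k (-k) (fun x => t * G' x) θ).im ∂P := by
    refine integral_mono ?_ hi.im (le_loopInt_im β hβ n k (mul_abs_le hB ht) hk)
    exact (((((integrable_psum_sq P k).const_mul _).sub (integrable_const _)).sub
      (integrable_const _)).sub (hsq.const_mul _)).const_mul _
  have h2 : ∫ θ, (loopInt β n k (-k) (fun x => t * G' x) θ).im ∂P = 0 := by
    have := integral_im hi
    simp only [RCLike.im_to_complex] at this
    rw [this, h.loop k hk1, Complex.zero_im]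
  have h3 : ∫ θ, (β / 8 * ‖psum n k θ‖ ^ 2 - k - 2 * B ^ 2 / β
      - β / 2 * ∑ j ∈ Ico 1 k, ‖psum n j θ‖ ^ 2) ∂P
      = β / 8 * (∫ θ, ‖psum n k θ‖ ^ 2 ∂P) - k - 2 * B ^ 2 / β - β / 2 * mS n P k := by
    have i1 : Integrable (fun θ => β / 8 * ‖psum n k θ‖ ^ 2) P :=
      (integrable_psum_sq P k).const_mul _
    have i2 : Integrable (fun θ => β / 8 * ‖psum n k θ‖ ^ 2 - k) P := i1.sub (integrable_const _)
    have i3 : Integrable (fun θ => β / 8 * ‖psum n k θ‖ ^ 2 - k - 2 * B ^ 2 / β) P :=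
      i2.sub (integrable_const _)
    rw [integral_sub i3 (hsq.const_mul _), integral_sub i2 (integrable_const _),
      integral_sub i1 (integrable_const _), integral_const_mul, integral_const_mul,
      integral_finsetSum _ fun (j : ℕ) _ => integrable_psum_sq P j]
    simp [mS]
  rw [h2, integral_const_mul, h3] at h1
  have h4 := nonpos_of_mul_nonpos_right h1 hn'
  set M := ∫ θ, ‖psum n k θ‖ ^ 2 ∂P
  have h5 : 2 * B ^ 2 / β ≤ 2 * B ^ 2 / β * k := le_mul_of_one_le_right (by positivity) hk1'
  have h6 : β / 8 * M ≤ (1 + 2 * B ^ 2 / β) * k + β / 2 * mS n P k := by linarith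
  calc M = 8 / β * (β / 8 * M) := by field_simp
    _ ≤ 8 / β * ((1 + 2 * B ^ 2 / β) * k + β / 2 * mS n P k) := by gcongr
    _ = _ := by field_simp; ring

/-- Second moments of fixed modes are bounded uniformly in `n` and in the tilt. The growth `8^k`
in the mode comes from iterating the recursive inequality. -/
lemma Tilt.mS_le_pow (h : Tilt β K G' n t P) (hβ : 0 < β) (hc : Continuous G')
    (hB : ∀ x, |G' x| ≤ B) (ht : |t| ≤ 1) (hn : 1 ≤ n) (k : ℕ)
    (hk : k * |β / 2 - 1| ≤ β / 4 * n) :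
    mS n P k ≤ 8 / β * (1 + 2 * B ^ 2 / β) * 8 ^ k := by
  set C := 8 / β * (1 + 2 * B ^ 2 / β) with hC
  have hC0 : 0 ≤ C := by positivity
  induction k with
  | zero => simpa [mS] using hC0
  | succ k ih =>
    have hk' : k * |β / 2 - 1| ≤ β / 4 * n := by
      refine le_trans ?_ hk
      gcongr; linarith
    rcases Nat.eq_zero_or_pos k with rfl | hk0
    · simp only [mS, zero_add, Finset.Ico_self, Finset.sum_empty]; positivity
    · have h1 := h.moment_le hβ hc hB ht hn hk0 hk'
      have h2 : mS n P (k + 1) = mS n P k + ∫ θ, ‖psum n k θ‖ ^ 2 ∂P := by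
        unfold mS; rw [Finset.sum_Ico_succ_top hk0]
      have h3 : (k : ℝ) ≤ 8 ^ k := by
        have : k < 8 ^ k := Nat.lt_pow_self (by norm_num)
        exact_mod_cast this.le
      have h4 := ih hk'
      rw [h2, pow_succ]
      nlinarith [mul_le_mul_of_nonneg_left h3 hC0, mul_nonneg hC0 (by positivity : (0:ℝ) ≤ 8 ^ k)]

lemma mS_le_trivial (P : Measure (Fin n → ℝ)) [IsProbabilityMeasure P] (k : ℕ) :
    mS n P k ≤ k * n ^ 2 := by
  unfold mS
  calc _ ≤ ∑ j ∈ Ico 1 k, (n:ℝ) ^ 2 := by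
        refine Finset.sum_le_sum fun j _ => ?_
        calc _ ≤ ∫ _, (n:ℝ) ^ 2 ∂P := by
              refine integral_mono (integrable_psum_sq P j) (integrable_const _) fun θ => ?_
              have := norm_psum_le n j θ
              simp only; gcongr
          _ = _ := by simp
    _ = (k - 1 : ℕ) * (n:ℝ) ^ 2 := by simp
    _ ≤ _ := by gcongr; exact Nat.sub_le _ _

lemma Tilt.mS_le_energy (h : Tilt β K G' n t P) (hn : 2 ≤ n) {k : ℕ} (hk : k ≤ n) :
    mS n P k ≤ k * (K * (n * (1 + Real.log n))) := by
  have := h.prob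
  refine le_trans ?_ (mul_le_mul_of_nonneg_left (h.energy hn) (Nat.cast_nonneg k))
  unfold lowEnergy mS
  rw [integral_finsetSum _ fun (j : ℕ) _ => (integrable_psum_sq P j).div_const (j : ℝ), Finset.mul_sum]
  have h0 : ∀ j : ℕ, 0 ≤ ∫ θ, ‖psum n j θ‖ ^ 2 ∂P := fun j => integral_nonneg fun θ => by positivity
  calc _ ≤ ∑ j ∈ Ico 1 k, (k:ℝ) * ∫ θ, ‖psum n j θ‖ ^ 2 / j ∂P := by
        refine Finset.sum_le_sum fun j hj => ?_
        rw [Finset.mem_Ico] at hj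
        have hj0 : (0:ℝ) < j := by exact_mod_cast hj.1
        have hjk : (j:ℝ) ≤ k := by exact_mod_cast hj.2.le
        rw [integral_div, mul_div_assoc', le_div_iff₀ hj0, mul_comm]
        exact mul_le_mul_of_nonneg_right hjk (h0 j)
    _ ≤ _ := by
        refine Finset.sum_le_sum_of_subset_of_nonneg (fun j hj => ?_) fun j _ _ => ?_
        · rw [Finset.mem_Ico] at hj; rw [Finset.mem_Icc]; omega
        · exact mul_nonneg (Nat.cast_nonneg _) (integral_nonneg fun θ => by positivity)

/-- The polynomial bound `S_k = O(k² n)`, uniform in `k`, `n` and the tilt, which dominates all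
series below. -/
lemma Tilt.mS_le (h : Tilt β K G' n t P) (hβ : 0 < β) (hK : 0 ≤ K) (hc : Continuous G')
    (hB : ∀ x, |G' x| ≤ B) (ht : |t| ≤ 1) (hn : 2 ≤ n) (k : ℕ) :
    mS n P k ≤ (4 * |β / 2 - 1| / β + 1 + 8 / β * (1 + 2 * B ^ 2 / β) + 4 * K) * (k ^ 2 * n) := by
  have := h.prob
  have hn' : (0:ℝ) < n := by exact_mod_cast (by omega : 0 < n)
  set κ := |β / 2 - 1| with hκ
  set C := 8 / β * (1 + 2 * B ^ 2 / β) with hC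
  have hC0 : 0 ≤ C := by positivity
  have hκ0 : 0 ≤ 4 * κ / β := by positivity
  rcases Nat.eq_zero_or_pos k with rfl | hk0
  · simp [mS]
  have hk1 : (1:ℝ) ≤ k := by exact_mod_cast hk0
  have hkn : (0:ℝ) ≤ k ^ 2 * n := by positivity
  have key : ∀ {D : ℝ}, D ≤ 4 * κ / β + 1 + C + 4 * K → mS n P k ≤ D * (k ^ 2 * n) →
      mS n P k ≤ (4 * κ / β + 1 + C + 4 * K) * (k ^ 2 * n) := fun h1 h2 =>
    h2.trans (mul_le_mul_of_nonneg_right h1 hkn)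
  have htriv := mS_le_trivial P k
  -- The recursion serves for `8^k ≤ n` and the energy bound for `n < 8^k`, where `log n ≤ 3k`;
  -- for `k` beyond a multiple of `n` the trivial bound `|p_j| ≤ n` is enough.
  by_cases h1 : k * κ ≤ β / 4 * n
  · by_cases h2 : k ≤ n
    · by_cases h3 : 8 ^ k ≤ n
      · refine key (D := C) (by linarith) ((h.mS_le_pow hβ hc hB ht (by omega) k h1).trans ?_)
        have h4 : (8:ℝ) ^ k ≤ n := by exact_mod_cast h3
        gcongr
        refine h4.trans (le_mul_of_one_le_left hn'.le (one_le_pow₀ hk1))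
      · refine key (D := 4 * K) (by linarith) ((h.mS_le_energy hn h2).trans ?_)
        have h4 : (n:ℝ) ≤ 8 ^ k := by exact_mod_cast (not_le.1 h3).le
        have h5 : Real.log n ≤ k * 3 := by
          calc Real.log n ≤ Real.log (8 ^ k) := Real.log_le_log hn' h4
            _ = k * Real.log 8 := Real.log_pow _ _
            _ ≤ k * 3 := by
                gcongr
                rw [show (8:ℝ) = 2 ^ 3 by norm_num, Real.log_pow]
                have := Real.log_two_lt_d9
                push_cast; linarith
        calc k * (K * (n * (1 + Real.log n))) ≤ k * (K * (n * (k + k * 3))) := by gcongr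
          _ = _ := by ring
    · refine key (D := 1) (by linarith) (htriv.trans ?_)
      have h4 : (n:ℝ) ≤ k := by exact_mod_cast (not_le.1 h2).le
      calc (k:ℝ) * n ^ 2 = k * n * n := by ring
        _ ≤ k * k * n := by gcongr
        _ = _ := by ring
  · refine key (D := 4 * κ / β) (by linarith) (htriv.trans ?_)
    have h4 : (n:ℝ) ≤ 4 * κ / β * k := by
      rw [div_mul_eq_mul_div, le_div_iff₀ hβ]
      linarith
    calc (k:ℝ) * n ^ 2 = k * n * n := by ring
      _ ≤ k * n * (4 * κ / β * k) := by gcongr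
      _ = _ := by ring

/-- The first moment of `p_k`, expressed through the loop equation with `m = 0`. -/
lemma Tilt.mean_eq (h : Tilt β K G' n t P) (hβ : 0 < β) (hc : Continuous G')
    (hB : ∀ x, |G' x| ≤ B) (hn : 1 ≤ n) {k : ℕ} (hk1 : 1 ≤ k) :
    ∫ θ, psum n k θ ∂P = -(∫ θ, quad n k θ ∂P) / n
      - (2 / β - 1) * (k / n) * ∫ θ, psum n k θ ∂P
      + 2 * Complex.I * t / β * ((∫ θ, ∑ μ, (G' (θ μ) : ℂ) * em k (θ μ) ∂P) / n) := by
  have := h.prob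
  have hl := h.loop k hk1 0
  have hn' : (n:ℂ) ≠ 0 := by exact_mod_cast (by omega : n ≠ 0)
  have hβ' : (β:ℂ) ≠ 0 := by exact_mod_cast hβ.ne'
  have e1 : ∀ θ, loopInt β n k 0 (fun x => t * G' x) θ =
      n * ((Complex.I * k + β / 2 * Complex.I * n - β / 2 * Complex.I * k) * psum n k θ
        + (t * ∑ μ, (G' (θ μ) : ℂ) * em k (θ μ)) + β / 2 * Complex.I * quad n k θ) := by
    intro θ
    unfold loopInt
    rw [psum_zero, Finset.mul_sum]
    have : ∑ μ, ((t * G' (θ μ) : ℝ) : ℂ) * em k (θ μ) = ∑ μ, t * ((G' (θ μ) : ℂ) * em k (θ μ)) :=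
      Finset.sum_congr rfl fun μ _ => by push_cast; ring
    rw [this]
    push_cast
    ring
  simp_rw [e1] at hl
  have i1 : Integrable (fun θ => (Complex.I * k + β / 2 * Complex.I * n - β / 2 * Complex.I * k) *
      psum n k θ + (t * ∑ μ, (G' (θ μ) : ℂ) * em k (θ μ))) P :=
    ((integrable_psum P k).const_mul _).add ((integrable_linstat P hc hB k).const_mul _)
  rw [integral_const_mul, integral_add i1 ((integrable_quad P k).const_mul _),
    integral_add ((integrable_psum P k).const_mul _) ((integrable_linstat P hc hB k).const_mul _),
    integral_const_mul, integral_const_mul, integral_const_mul] at hl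
  have hl2 := (mul_eq_zero.1 hl).resolve_left hn'
  set e := ∫ θ, psum n k θ ∂P
  set R := ∫ θ, ∑ μ, (G' (θ μ) : ℂ) * em k (θ μ) ∂P
  set Q := ∫ θ, quad n k θ ∂P
  field_simp
  have hI : Complex.I * Complex.I = -1 := Complex.I_mul_I
  linear_combination (-2 * Complex.I) * hl2 + (2 * k * e + β * n * e - β * k * e + β * Q) * hI

lemma norm_integral_quad_le (P : Measure (Fin n → ℝ)) [IsProbabilityMeasure P] (k : ℕ) :
    ‖∫ θ, quad n k θ ∂P‖ ≤ mS n P k := by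
  refine (norm_integral_le_integral_norm _).trans ?_
  unfold mS
  rw [← integral_finsetSum _ fun (j : ℕ) _ => integrable_psum_sq P j]
  exact integral_mono (integrable_quad P k).norm
    (integrable_finsetSum _ fun j _ => integrable_psum_sq P j) (norm_quad_le n k)

lemma norm_integral_psum_le (P : Measure (Fin n → ℝ)) [IsProbabilityMeasure P] (m : ℤ) :
    ‖∫ θ, psum n m θ ∂P‖ ≤ n := by
  have := norm_integral_le_of_norm_le_const (μ := P) (f := psum n m)
    (Eventually.of_forall (norm_psum_le n m))
  simpa using this

lemma norm_integral_linstat_le (P : Measure (Fin n → ℝ)) [IsProbabilityMeasure P]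
    (hB : ∀ x, |G' x| ≤ B) (k : ℤ) :
    ‖∫ θ, ∑ μ, (G' (θ μ) : ℂ) * em k (θ μ) ∂P‖ ≤ n * B := by
  have := norm_integral_le_of_norm_le_const (μ := P)
    (Eventually.of_forall (norm_linstat_le (n := n) hB k))
  simpa using this

/-- A bound on the first moments, uniform in `n` and the tilt. -/
lemma Tilt.mean_le (h : Tilt β K G' n t P) (hβ : 0 < β) (hK : 0 ≤ K) (hc : Continuous G')
    (hB : ∀ x, |G' x| ≤ B) (ht : |t| ≤ 1) (hn : 2 ≤ n) {k : ℕ} (hk1 : 1 ≤ k) :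
    ‖∫ θ, psum n k θ ∂P‖ ≤ ((4 * |β / 2 - 1| / β + 1 + 8 / β * (1 + 2 * B ^ 2 / β) + 4 * K)
      + |2 / β - 1| + 2 / β * B) * k ^ 2 := by
  have := h.prob
  have hn' : (0:ℝ) < n := by exact_mod_cast (by omega : 0 < n)
  have hB0 : 0 ≤ B := (abs_nonneg _).trans (hB 0)
  have hk : (1:ℝ) ≤ k := by exact_mod_cast hk1
  have hk2 : (k:ℝ) ≤ k ^ 2 := by nlinarith
  have hk3 : (1:ℝ) ≤ k ^ 2 := by nlinarith
  have h1 := (norm_integral_quad_le P k).trans (h.mS_le hβ hK hc hB ht hn k)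
  have h2 := norm_integral_psum_le P (k : ℤ)
  have h3 := norm_integral_linstat_le (B := B) P hB k
  set D := 4 * |β / 2 - 1| / β + 1 + 8 / β * (1 + 2 * B ^ 2 / β) + 4 * K
  rw [h.mean_eq hβ hc hB (by omega) hk1]
  refine (norm_add_le _ _).trans ?_
  rw [add_mul]
  refine add_le_add ((norm_sub_le _ _).trans ?_) ?_
  · rw [add_mul]
    refine add_le_add ?_ ?_
    · rw [norm_div, norm_neg, Complex.norm_natCast, div_le_iff₀ hn']
      linarith
    · have e1 : ‖(2 / β - 1 : ℂ)‖ = |2 / β - 1| := by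
        rw [show (2 / β - 1 : ℂ) = ((2 / β - 1 : ℝ) : ℂ) by push_cast; rfl, Complex.norm_real]; rfl
      rw [norm_mul, norm_mul, e1, norm_div, Complex.norm_natCast, Complex.norm_natCast, mul_assoc]
      refine mul_le_mul_of_nonneg_left ?_ (abs_nonneg _)
      calc (k:ℝ) / n * ‖∫ θ, psum n k θ ∂P‖ ≤ k / n * n := by gcongr
        _ = k := by field_simp
        _ ≤ _ := hk2
  · have e1 : ‖2 * Complex.I * t / β‖ ≤ 2 / β := by
      rw [norm_div, norm_mul, norm_mul, Complex.norm_I, Complex.norm_real, Complex.norm_real,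
        Complex.norm_ofNat, Real.norm_eq_abs, Real.norm_of_nonneg hβ.le]
      gcongr; linarith
    rw [norm_mul, norm_div _ (n:ℂ), Complex.norm_natCast, mul_assoc (2 / β)]
    refine mul_le_mul e1 ?_ (by positivity) (by positivity)
    rw [div_le_iff₀ hn']
    calc _ ≤ n * B := h3
      _ ≤ B * k ^ 2 * n := by nlinarith [mul_nonneg hB0 hn'.le]

end CBE

/-! ### Limits of the first moments -/

namespace CBE

variable {β K B : ℝ} {G G' : ℝ → ℝ} {c : ℕ → ℂ} {t : ℕ → ℝ} {P : ∀ n, Measure (Fin n → ℝ)}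

lemma eventually_cond (hβ : 0 < β) (k : ℕ) :
    ∀ᶠ n : ℕ in atTop, k * |β / 2 - 1| ≤ β / 4 * n := by
  have h : Tendsto (fun n : ℕ => β / 4 * (n:ℝ)) atTop atTop :=
    tendsto_natCast_atTop_atTop.const_mul_atTop (by positivity)
  exact h.eventually_ge_atTop _

lemma tendsto_mS (h : ∀ n, Tilt β K G' n (t n) (P n)) (hβ : 0 < β) (hc : Continuous G')
    (hB : ∀ x, |G' x| ≤ B) (ht : ∀ n, |t n| ≤ 1) (k : ℕ) :
    Tendsto (fun n => mS n (P n) k / n) atTop (𝓝 0) := by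
  refine squeeze_zero' (Eventually.of_forall fun n => ?_) ?_
    (tendsto_const_div_atTop_nhds_zero_nat (8 / β * (1 + 2 * B ^ 2 / β) * 8 ^ k))
  · exact div_nonneg (Finset.sum_nonneg fun j _ => integral_nonneg fun θ => by positivity)
      (Nat.cast_nonneg _)
  · filter_upwards [eventually_cond hβ k, eventually_ge_atTop 1] with n hn hn1
    gcongr
    exact (h n).mS_le_pow hβ hc hB (ht n) hn1 k hn

/-- The normalised power sums of nonzero order have vanishing mean in the limit. -/
lemma tendsto_psum_div (h : ∀ n, Tilt β K G' n (t n) (P n)) (hβ : 0 < β) (hc : Continuous G')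
    (hB : ∀ x, |G' x| ≤ B) (ht : ∀ n, |t n| ≤ 1) {l : ℤ} (hl : l ≠ 0) :
    Tendsto (fun n : ℕ => (∫ θ, psum n l θ ∂(P n)) / n) atTop (𝓝 0) := by
  set k := l.natAbs with hk
  have hk1 : 1 ≤ k := Int.natAbs_pos.2 hl
  have hnorm : ∀ n (θ : Fin n → ℝ), ‖psum n l θ‖ = ‖psum n k θ‖ := by
    intro n θ
    rcases Int.natAbs_eq l with h1 | h1
    · rw [h1]
    · rw [h1, ← hk, psum_neg, Complex.norm_conj]
  have hbound : Tendsto (fun n : ℕ => 1 / (n:ℝ) + mS n (P n) (k + 1) / n) atTop (𝓝 0) := by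
    simpa using (tendsto_const_div_atTop_nhds_zero_nat (1:ℝ)).add
      (tendsto_mS h hβ hc hB ht (k + 1))
  refine squeeze_zero_norm' (Eventually.of_forall fun n => ?_) hbound
  have := (h n).prob
  rw [norm_div, Complex.norm_natCast, ← add_div]
  gcongr
  calc _ ≤ ∫ θ, ‖psum n l θ‖ ∂(P n) := norm_integral_le_integral_norm _
    _ ≤ ∫ θ, (1 + ‖psum n k θ‖ ^ 2) ∂(P n) := by
        refine integral_mono (integrable_psum _ _).norm
          ((integrable_const _).add (integrable_psum_sq _ _)) fun θ => ?_
        simp only [hnorm]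
        nlinarith [sq_nonneg (‖psum n k θ‖ - 1), norm_nonneg (psum n k θ)]
    _ = 1 + ∫ θ, ‖psum n k θ‖ ^ 2 ∂(P n) := by
        rw [integral_add (integrable_const _) (integrable_psum_sq _ _)]; simp
    _ ≤ _ := by
        gcongr
        unfold mS
        exact Finset.single_le_sum (f := fun j : ℕ => ∫ θ, ‖psum n j θ‖ ^ 2 ∂(P n))
          (fun j _ => integral_nonneg fun θ => by positivity)
          (Finset.mem_Ico.2 ⟨hk1, Nat.lt_succ_self k⟩)

lemma FourierData.summable_one (hF : FourierData G G' c) :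
    Summable fun k : ℕ => (k:ℝ) * ‖c k‖ := by
  refine Summable.of_nonneg_of_le (fun k => by positivity) (fun k => ?_) hF.summable
  gcongr
  exact_mod_cast Nat.le_self_pow two_ne_zero k

lemma re_mul_em (z : ℂ) (m : ℕ) (k : ℤ) (x : ℝ) :
    ((2 * (z * em m x).re : ℝ) : ℂ) * em k x =
      z * em (k + m) x + (starRingEnd ℂ) z * em (k - m) x := by
  rw [Complex.ofReal_mul, Complex.ofReal_ofNat, ← Complex.ofReal_ofNat, ← Complex.ofReal_mul,
    ← Complex.add_conj, map_mul, sub_eq_add_neg, em_add, em_add, em_neg]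
  ring

lemma sum_re_mul_em (z : ℂ) (m : ℕ) (k : ℤ) {n : ℕ} (θ : Fin n → ℝ) :
    ∑ μ, ((2 * (z * em m (θ μ)).re : ℝ) : ℂ) * em k (θ μ) =
      z * psum n (k + m) θ + (starRingEnd ℂ) z * psum n (k - m) θ := by
  simp only [re_mul_em, Finset.sum_add_distrib, psum, Finset.mul_sum]

/-- Fourier expansion of the linear statistic of `f(x) e^{ikx}`, in mean. -/
lemma hasSum_integral_linstat {n : ℕ} (P : Measure (Fin n → ℝ)) [IsProbabilityMeasure P]
    {f : ℝ → ℝ} {z : ℕ → ℂ} (hf : ∀ x, HasSum (fun m : ℕ => 2 * (z m * em m x).re) (f x))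
    (hz : Summable fun m => ‖z m‖) (k : ℤ) :
    HasSum (fun m : ℕ => z m * ∫ θ, psum n (k + m) θ ∂P +
      (starRingEnd ℂ) (z m) * ∫ θ, psum n (k - m) θ ∂P)
      (∫ θ, ∑ μ, (f (θ μ) : ℂ) * em k (θ μ) ∂P) := by
  set F : ℕ → (Fin n → ℝ) → ℂ := fun m θ =>
    z m * psum n (k + m) θ + (starRingEnd ℂ) (z m) * psum n (k - m) θ with hFdef
  have hFi : ∀ m, Integrable (F m) P := fun m =>
    ((integrable_psum P _).const_mul _).add ((integrable_psum P _).const_mul _)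
  have hFb : ∀ m θ, ‖F m θ‖ ≤ ‖z m‖ * (2 * n) := by
    intro m θ
    refine (norm_add_le _ _).trans ?_
    rw [norm_mul, norm_mul, Complex.norm_conj]
    nlinarith [norm_psum_le n (k + m) θ, norm_psum_le n (k - m) θ, norm_nonneg (z m)]
  have hsum : Summable fun m => ∫ θ, ‖F m θ‖ ∂P := by
    refine Summable.of_nonneg_of_le (fun m => integral_nonneg fun θ => norm_nonneg _) (fun m => ?_)
      (hz.mul_right (2 * (n:ℝ)))
    calc _ ≤ ∫ _, ‖z m‖ * (2 * n) ∂P :=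
          integral_mono (hFi m).norm (integrable_const _) (hFb m)
      _ = _ := by simp
  have h := hasSum_integral_of_summable_integral_norm hFi hsum
  have h1 : ∀ m, ∫ θ, F m θ ∂P = z m * ∫ θ, psum n (k + m) θ ∂P +
      (starRingEnd ℂ) (z m) * ∫ θ, psum n (k - m) θ ∂P := by
    intro m
    rw [hFdef]
    simp only
    rw [integral_add ((integrable_psum P _).const_mul _) ((integrable_psum P _).const_mul _),
      integral_const_mul, integral_const_mul]
  have h2 : ∀ θ, ∑' m, F m θ = ∑ μ, (f (θ μ) : ℂ) * em k (θ μ) := by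
    intro θ
    have h3 : HasSum (fun m => ∑ μ, ((2 * (z m * em m (θ μ)).re : ℝ) : ℂ) * em k (θ μ))
        (∑ μ, (f (θ μ) : ℂ) * em k (θ μ)) :=
      hasSum_sum fun μ _ => ((Complex.hasSum_ofReal).2 (hf (θ μ))).mul_right _
    simp only [sum_re_mul_em] at h3
    exact h3.tsum_eq
  simp only [h1, h2] at h
  exact h

/-- The mean of `n⁻¹ ∑ G'(θ_μ) e^{ikθ_μ}` converges to the Fourier coefficient of `G'` of
order `-k`, because the empirical measure becomes uniform. -/
lemma tendsto_linstat (hF : FourierData G G' c) (h : ∀ n, Tilt β K G' n (t n) (P n)) (hβ : 0 < β)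
    (hB : ∀ x, |G' x| ≤ B) (ht : ∀ n, |t n| ≤ 1) {k : ℕ} (hk : 1 ≤ k) :
    Tendsto (fun n : ℕ => (∫ θ, ∑ μ, (G' (θ μ) : ℂ) * em k (θ μ) ∂(P n)) / n) atTop
      (𝓝 (-(Complex.I * k * (starRingEnd ℂ) (c k)))) := by
  set z : ℕ → ℂ := fun m => Complex.I * m * c m with hzdef
  have hznorm : ∀ m, ‖z m‖ = m * ‖c m‖ := fun m => by simp [hzdef]
  have hz : Summable fun m => ‖z m‖ := hF.summable_one.congr fun m => (hznorm m).symm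
  set l : ℕ → ℂ := fun m => if m = k then (starRingEnd ℂ) (z k) else 0 with hl
  have hlim : -(Complex.I * k * (starRingEnd ℂ) (c k)) = ∑' m, l m := by
    rw [hl, tsum_ite_eq, hzdef]
    simp
  have hval : ∀ n : ℕ, (∫ θ, ∑ μ, (G' (θ μ) : ℂ) * em k (θ μ) ∂(P n)) / n =
      ∑' m : ℕ, (z m * ((∫ θ, psum n (k + m) θ ∂(P n)) / n) +
        (starRingEnd ℂ) (z m) * ((∫ θ, psum n (k - m) θ ∂(P n)) / n)) := by
    intro n
    have := (h n).prob
    rw [← ((hasSum_integral_linstat (P n) hF.hasSum' hz k).div_const (n:ℂ)).tsum_eq]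
    congr 1; ext m; ring
  rw [hlim]
  refine Tendsto.congr (fun n => (hval n).symm) ?_
  refine tendsto_tsum_of_dominated_convergence (bound := fun m => 2 * ‖z m‖) (hz.mul_left 2)
    (fun m => ?_) (Eventually.of_forall fun n m => ?_)
  · have h1 : Tendsto (fun n : ℕ => (∫ θ, psum n (k + m) θ ∂(P n)) / n) atTop (𝓝 0) :=
      tendsto_psum_div h hβ hF.cont hB ht (by omega)
    by_cases hm : m = k
    · subst hm
      have h2 : Tendsto (fun n : ℕ => (∫ θ, psum n (m - m) θ ∂(P n)) / n) atTop (𝓝 1) := by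
        refine Tendsto.congr' ?_ tendsto_const_nhds
        filter_upwards [eventually_ge_atTop 1] with n hn
        have := (h n).prob
        have hn' : (n:ℂ) ≠ 0 := by exact_mod_cast (by omega : n ≠ 0)
        simp [psum_zero, hn']
      simpa [hl] using (h1.const_mul (z m)).add (h2.const_mul ((starRingEnd ℂ) (z m)))
    · have h2 : Tendsto (fun n : ℕ => (∫ θ, psum n (k - m) θ ∂(P n)) / n) atTop (𝓝 0) :=
        tendsto_psum_div h hβ hF.cont hB ht (by omega)
      simpa [hl, hm] using (h1.const_mul (z m)).add (h2.const_mul ((starRingEnd ℂ) (z m)))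
  · have := (h n).prob
    have hb : ∀ j : ℤ, ‖(∫ θ, psum n j θ ∂(P n)) / n‖ ≤ 1 := fun j => by
      rw [norm_div, Complex.norm_natCast]
      exact div_le_one_of_le₀ (norm_integral_psum_le (P n) j) (Nat.cast_nonneg _)
    refine (norm_add_le _ _).trans ?_
    rw [norm_mul (z m), norm_mul ((starRingEnd ℂ) (z m)), Complex.norm_conj]
    nlinarith [hb (k + m), hb (k - m), norm_nonneg (z m)]

/-- The limit of the first moments: `E p_k ≈ (2 k t / β) c̄_k`. -/
lemma tendsto_mean (hF : FourierData G G' c) (h : ∀ n, Tilt β K G' n (t n) (P n)) (hβ : 0 < β)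
    (hB : ∀ x, |G' x| ≤ B) (ht : ∀ n, |t n| ≤ 1) {k : ℕ} (hk : 1 ≤ k) :
    Tendsto (fun n : ℕ => (∫ θ, psum n k θ ∂(P n)) -
      t n * (2 * k / β * (starRingEnd ℂ) (c k))) atTop (𝓝 0) := by
  have h1 : Tendsto (fun n : ℕ => (∫ θ, quad n k θ ∂(P n)) / n) atTop (𝓝 0) := by
    refine squeeze_zero_norm (fun n => ?_) (tendsto_mS h hβ hF.cont hB ht k)
    have := (h n).prob
    rw [norm_div, Complex.norm_natCast]
    gcongr
    exact norm_integral_quad_le (P n) k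
  have h2 : Tendsto (fun n : ℕ => (∫ θ, psum n k θ ∂(P n)) / n) atTop (𝓝 0) :=
    tendsto_psum_div h hβ hF.cont hB ht (by omega)
  have h3 := (tendsto_linstat hF h hβ hB ht hk).sub_const (-(Complex.I * k * (starRingEnd ℂ) (c k)))
  rw [sub_self] at h3
  have h4 : Tendsto (fun n : ℕ => (2 * Complex.I * t n / β : ℂ) *
      ((∫ θ, ∑ μ, (G' (θ μ) : ℂ) * em k (θ μ) ∂(P n)) / n
        - (-(Complex.I * k * (starRingEnd ℂ) (c k))))) atTop (𝓝 0) := by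
    have h5 := h3.norm.const_mul (2 / β)
    rw [norm_zero, mul_zero] at h5
    refine squeeze_zero_norm (fun n => ?_) h5
    rw [norm_mul]
    refine mul_le_mul_of_nonneg_right ?_ (norm_nonneg _)
    rw [norm_div, norm_mul, norm_mul, Complex.norm_I, Complex.norm_real, Complex.norm_real,
      Complex.norm_ofNat, Real.norm_eq_abs, Real.norm_of_nonneg hβ.le]
    gcongr; linarith [ht n]
  have h5 := (h1.neg.sub (h2.const_mul ((2 / β - 1) * k : ℂ))).add h4
  simp only [neg_zero, mul_zero, sub_zero, add_zero] at h5
  refine Tendsto.congr' ?_ h5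
  filter_upwards [eventually_ge_atTop 1] with n hn
  have hm := (h n).mean_eq hβ hF.cont hB hn hk
  conv_rhs => rw [hm]
  linear_combination (2 * t n * k * (starRingEnd ℂ) (c k) / β) * Complex.I_mul_I

/-- The mean of the linear statistic of `G` under the tilted measures. -/
lemma tendsto_statistic (hF : FourierData G G' c) (h : ∀ n, Tilt β K G' n (t n) (P n))
    (hβ : 0 < β) (hK : 0 ≤ K) (hB : ∀ x, |G' x| ≤ B) (ht : ∀ n, |t n| ≤ 1) :
    Tendsto (fun n : ℕ => (∫ θ, ∑ μ, G (θ μ) ∂(P n)) -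
      t n * ∑' k : ℕ, 4 * k / β * ‖c k‖ ^ 2) atTop (𝓝 0) := by
  set e : ℕ → ℕ → ℂ := fun n k => ∫ θ, psum n k θ ∂(P n) with he
  obtain ⟨D, hD0, hD⟩ : ∃ D : ℝ, 0 ≤ D ∧ ∀ n, 2 ≤ n → ∀ k, 1 ≤ k → ‖e n k‖ ≤ D * k ^ 2 := by
    have hB0 : 0 ≤ B := (abs_nonneg _).trans (hB 0)
    exact ⟨_, by positivity, fun n hn k hk => (h n).mean_le hβ hK hF.cont hB (ht n) hn hk⟩
  have hcs : Summable fun k => ‖c k‖ := by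
    refine Summable.of_nonneg_of_le (fun k => by positivity) (fun k => ?_) hF.summable
    rcases Nat.eq_zero_or_pos k with rfl | hk
    · simp [hF.zero]
    · have : (1:ℝ) ≤ k := by exact_mod_cast hk
      exact le_mul_of_one_le_left (norm_nonneg _) (one_le_pow₀ this)
  have hsq : Summable fun k : ℕ => (k:ℝ) * ‖c k‖ ^ 2 := by
    obtain ⟨M, hM⟩ := hcs.tendsto_atTop_zero.bddAbove_range
    have hM' : ∀ k, ‖c k‖ ≤ M := fun k => hM ⟨k, rfl⟩
    refine Summable.of_nonneg_of_le (fun k => by positivity) (fun k => ?_)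
      (hF.summable_one.mul_right M)
    rw [pow_two, ← mul_assoc]
    gcongr
    exact hM' k
  have hvar : Summable fun k : ℕ => 4 * k / β * ‖c k‖ ^ 2 :=
    (hsq.mul_left (4 / β)).congr fun k => by ring
  have hEL : ∀ n, HasSum (fun k : ℕ => 2 * (c k * e n k).re) (∫ θ, ∑ μ, G (θ μ) ∂(P n)) := by
    intro n
    have := (h n).prob
    have h1 := hasSum_integral_linstat (P n) hF.hasSum hcs 0
    simp only [em_zero, mul_one, zero_add, zero_sub] at h1
    have h2 : ∫ θ : Fin n → ℝ, ∑ μ, (G (θ μ) : ℂ) ∂(P n) = ((∫ θ, ∑ μ, G (θ μ) ∂(P n) : ℝ) : ℂ) := by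
      rw [← integral_complex_ofReal]; push_cast; rfl
    rw [h2] at h1
    have h3 := Complex.reCLM.hasSum h1
    simp only [Complex.reCLM_apply, Complex.ofReal_re] at h3
    refine h3.congr_fun fun k => ?_
    have h4 : ∫ θ, psum n (-k) θ ∂(P n) = (starRingEnd ℂ) (e n k) := by
      simp only [psum_neg, he]
      exact integral_conj
    rw [h4, ← map_mul, Complex.add_re, Complex.conj_re]
    ring
  have hval : ∀ n, (∫ θ, ∑ μ, G (θ μ) ∂(P n)) - t n * ∑' k : ℕ, 4 * k / β * ‖c k‖ ^ 2
      = ∑' k : ℕ, (2 * (c k * e n k).re - t n * (4 * k / β * ‖c k‖ ^ 2)) := by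
    intro n
    exact (((hEL n).sub (hvar.hasSum.mul_left (t n))).tsum_eq).symm
  refine Tendsto.congr (fun n => (hval n).symm) ?_
  rw [show (0:ℝ) = ∑' _ : ℕ, (0:ℝ) by simp]
  refine tendsto_tsum_of_dominated_convergence
    (bound := fun k => 2 * D * ((k:ℝ) ^ 2 * ‖c k‖) + 4 * k / β * ‖c k‖ ^ 2)
    ((hF.summable.mul_left _).add hvar) (fun k => ?_) ?_
  · rcases Nat.eq_zero_or_pos k with rfl | hk
    · simp [hF.zero]
    · have h1 := (tendsto_mean hF h hβ hB ht hk).const_mul (2 * c k)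
      rw [mul_zero] at h1
      have h2 := (Complex.continuous_re.tendsto 0).comp h1
      rw [Complex.zero_re] at h2
      refine h2.congr fun n => ?_
      have h3 : 2 * c k * (e n k - t n * (2 * k / β * (starRingEnd ℂ) (c k)))
          = ((2:ℝ):ℂ) * (c k * e n k) - ((t n * (4 * k / β * ‖c k‖ ^ 2) : ℝ) : ℂ) := by
        have h4 : c k * (starRingEnd ℂ) (c k) = (‖c k‖ ^ 2 : ℂ) := Complex.mul_conj' _
        push_cast
        linear_combination (-(4 * t n * k / β : ℂ)) * h4
      simp only [Function.comp_apply]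
      rw [h3, Complex.sub_re, Complex.ofReal_re, Complex.re_ofReal_mul]
  · filter_upwards [eventually_ge_atTop 2] with n hn k
    rcases Nat.eq_zero_or_pos k with rfl | hk
    · simp [hF.zero]
    · refine (norm_sub_le _ _).trans (add_le_add ?_ ?_)
      · rw [norm_mul, Real.norm_ofNat, Real.norm_eq_abs]
        calc 2 * |(c k * e n k).re| ≤ 2 * ‖c k * e n k‖ := by
              gcongr; exact Complex.abs_re_le_norm _
          _ ≤ 2 * (‖c k‖ * (D * k ^ 2)) := by
              rw [norm_mul]; gcongr; exact hD n hn k hk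
          _ = _ := by ring
      · rw [norm_mul, Real.norm_of_nonneg (by positivity : 0 ≤ 4 * (k:ℝ) / β * ‖c k‖ ^ 2)]
        exact mul_le_of_le_one_left (by positivity) (ht n)

end CBE

/-! ### Integration over the tilt -/

namespace CBE

variable {β g : ℝ} {G : ℝ → ℝ}

lemma hasDerivAt_tZ (hβ : 0 ≤ β) (n : ℕ) (hG : Continuous G) (hg : ∀ x, |G x| ≤ g) (t : ℝ) :
    HasDerivAt (fun t => tZ β n fun x => t * G x)
      (∫ θ in cbeCube n, tw β n (fun x => t * G x) θ • ∑ μ, G (θ μ)) t := by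
  have hg0 : 0 ≤ g := (abs_nonneg _).trans (hg 0)
  have hW := continuous_cbeWeight β hβ n
  have hL : Continuous fun θ : Fin n → ℝ => ∑ μ, G (θ μ) := by fun_prop
  have hLb : ∀ θ : Fin n → ℝ, |∑ μ, G (θ μ)| ≤ n * g := fun θ =>
    (Finset.abs_sum_le_sum_abs _ _).trans (by
      calc _ ≤ ∑ μ : Fin n, g := Finset.sum_le_sum fun μ _ => hg _
        _ = _ := by simp)
  have htw : ∀ s : ℝ, Continuous (tw β n fun x => s * G x) := fun s =>
    continuous_tw β hβ n (continuous_const.mul hG)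
  refine (hasDerivAt_integral_of_dominated_loc_of_deriv_le (μ := volume.restrict (cbeCube n))
    (F := fun s θ => tw β n (fun x => s * G x) θ)
    (F' := fun s θ => tw β n (fun x => s * G x) θ • ∑ μ, G (θ μ))
    (bound := fun θ => Real.exp ((|t| + 1) * (n * g)) * cbeWeight β n θ * (n * g))
    (Metric.ball_mem_nhds t one_pos) (Eventually.of_forall fun s => (htw s).aestronglyMeasurable)
    (integrable_cube (htw t)) ((htw t).smul hL).aestronglyMeasurable ?_
    (integrable_cube (by fun_prop)) ?_).2
  · refine Eventually.of_forall fun θ s hs => ?_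
    have hs' : |s| ≤ |t| + 1 := by
      have h1 : |s - t| < 1 := hs
      have h2 : |s| ≤ |s - t| + |t| := by simpa using abs_add_le (s - t) t
      linarith
    rw [norm_smul, Real.norm_of_nonneg (tw_nonneg _ _ _ _), Real.norm_eq_abs]
    refine mul_le_mul ?_ (hLb θ) (abs_nonneg _)
      (mul_nonneg (Real.exp_pos _).le (cbeWeight_nonneg _ _ _))
    refine mul_le_mul_of_nonneg_right (Real.exp_le_exp.2 ?_) (cbeWeight_nonneg _ _ _)
    rw [← Finset.mul_sum]
    refine (le_abs_self _).trans ?_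
    rw [abs_mul]
    exact mul_le_mul hs' (hLb θ) (abs_nonneg _) (by positivity)
  · refine Eventually.of_forall fun θ s _ => ?_
    have h1 : ∀ s : ℝ, tw β n (fun x => s * G x) θ
        = Real.exp (s * ∑ μ, G (θ μ)) * cbeWeight β n θ := fun s => by
      simp only [tw, Finset.mul_sum]
    simp only [h1]
    have h2 := (((hasDerivAt_id s).mul_const (∑ μ, G (θ μ))).exp).mul_const (cbeWeight β n θ)
    refine h2.congr_deriv ?_
    simp only [smul_eq_mul, id]
    ring

/-- Thermodynamic integration by the mean value theorem: the increment of the free energy is the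
mean of the linear statistic at some intermediate tilt. -/
lemma exists_tilt (hβ : 0 ≤ β) (n : ℕ) (hG : Continuous G) (hg : ∀ x, |G x| ≤ g) (v : ℝ) :
    ∃ t : ℝ, |t| ≤ 1 ∧ cbeExp β n (fun θ => Real.exp (∑ μ, G (θ μ))) =
      Real.exp (v / 2 + ((∫ θ, ∑ μ, G (θ μ) ∂(tm β n fun x => t * G x)) - t * v)) := by
  have hb : ∀ t : ℝ, ∀ x, |t * G x| ≤ |t| * g := fun t x => by
    rw [abs_mul]; exact mul_le_mul_of_nonneg_left (hg x) (abs_nonneg _)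
  have hpos : ∀ t : ℝ, 0 < tZ β n fun x => t * G x := fun t =>
    tZ_pos β hβ n (continuous_const.mul hG) (hb t)
  have hd : ∀ t : ℝ, HasDerivAt (fun t => Real.log (tZ β n fun x => t * G x) - v / 2 * t ^ 2)
      ((∫ θ, ∑ μ, G (θ μ) ∂(tm β n fun x => t * G x)) - t * v) t := by
    intro t
    have h1 := ((hasDerivAt_tZ hβ n hG hg t).log (hpos t).ne').sub
      ((hasDerivAt_pow 2 t).const_mul (v / 2))
    refine h1.congr_deriv ?_
    rw [integral_tm β hβ n (V := fun x => t * G x) (continuous_const.mul hG), smul_eq_mul,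
      div_eq_inv_mul]
    norm_num
    ring
  obtain ⟨t, ht, hslope⟩ := exists_hasDerivAt_eq_slope _ _ zero_lt_one
    (fun t _ => (hd t).continuousAt.continuousWithinAt) (fun t _ => hd t)
  refine ⟨t, abs_le.2 ⟨by linarith [ht.1], ht.2.le⟩, ?_⟩
  rw [hslope]
  have h0 : cbeExp β n (fun θ => Real.exp (∑ μ, G (θ μ)))
      = (tZ β n fun x => 1 * G x) / tZ β n fun x => 0 * G x := by
    simp [cbeExp, tZ, tw]
  rw [h0, ← Real.exp_log (div_pos (hpos 1) (hpos 0)), Real.log_div (hpos 1).ne' (hpos 0).ne']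
  congr 1
  ring

end CBE

/-- Relative Szegő limit theorem on the unit circle: for a 2π-periodic `C^{4+α}` function `G`
with zero mean, `E_n^β[exp(∑ G(θ_μ))] → exp((1/(2β)) ∑_{k≥1} k (a_k² + b_k²))`. -/
theorem relative_szego_circle (β α : ℝ) (hβ : 0 < β) (hα : 0 < α) (hα1 : α < 1)
    (G : ℝ → ℝ) (hper : Function.Periodic G (2 * Real.pi))
    (hreg : ContDiff ℝ 4 G)
    (hHolder : ∃ C : NNReal, HolderWith C α.toNNReal (iteratedDeriv 4 G))
    (hmean : ∫ θ in (0:ℝ)..(2 * Real.pi), G θ = 0)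
    (a b : ℕ → ℝ)
    (ha : ∀ k, a k = (1 / Real.pi) * ∫ θ in (0:ℝ)..(2 * Real.pi), G θ * Real.cos (k * θ))
    (hb : ∀ k, b k = (1 / Real.pi) * ∫ θ in (0:ℝ)..(2 * Real.pi), G θ * Real.sin (k * θ)) :
    Tendsto (fun n => cbeExp β n (fun θ => Real.exp (∑ μ, G (θ μ)))) atTop
      (𝓝 (Real.exp ((1 / (2 * β)) * ∑' k : ℕ, (k : ℝ) * (a k ^ 2 + b k ^ 2)))) := by
  have hF := CBE.fourierData hper hreg hmean
  have hpi : 0 < 2 * Real.pi := by positivity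
  -- a periodic continuous function is bounded
  have hbdd : ∀ f : ℝ → ℝ, Continuous f → Function.Periodic f (2 * Real.pi) →
      ∃ C, ∀ x, |f x| ≤ C := by
    intro f hf hp
    obtain ⟨C, hC⟩ := (isCompact_Icc (a := (0:ℝ)) (b := 2 * Real.pi)).exists_bound_of_continuousOn
      hf.continuousOn
    refine ⟨C, fun x => ?_⟩
    obtain ⟨y, hy, hxy⟩ := hp.exists_mem_Ico₀ hpi x
    rw [hxy]
    exact hC y ⟨hy.1, hy.2.le⟩
  obtain ⟨g, hg⟩ := hbdd G hreg.continuous hper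
  obtain ⟨B, hB⟩ := hbdd (deriv G) hF.cont (CBE.periodic_deriv hper)
  have hg0 : 0 ≤ g := (abs_nonneg _).trans (hg 0)
  set v : ℝ := ∑' k : ℕ, 4 * k / β * ‖CBE.fc G k‖ ^ 2 with hv
  choose t ht hval using fun n => CBE.exists_tilt hβ.le n hreg.continuous hg v
  have hlim := CBE.tendsto_statistic hF
    (fun n => CBE.tilt_tm β hβ n hg hF.hasDeriv hF.cont hper (ht n)) hβ (by positivity) hB ht
  have hvab : v / 2 = (1 / (2 * β)) * ∑' k : ℕ, (k : ℝ) * (a k ^ 2 + b k ^ 2) := by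
    rw [hv, ← tsum_div_const, ← tsum_mul_left]
    congr 1; ext k
    have h1 : ‖CBE.fc G k‖ ^ 2 = (a k ^ 2 + b k ^ 2) / 4 := by
      rw [CBE.fc_eq G hreg.continuous k, ← ha, ← hb, ← Complex.normSq_eq_norm_sq,
        Complex.normSq_apply]
      simp
      ring
    rw [h1]
    field_simp
  simp_rw [hval]
  rw [← hvab]
  refine (Real.continuous_exp.tendsto _).comp ?_
  simpa using hlim.const_add (v / 2)
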